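/- There exists a family of partial functions f : D → {0,1} with D ⊆ {0,1}^n and certifying functions φ for f such that R_0(f_CS(φ)) = Ω̃(R_0(f)^{3/2} + R_0(φ)^{3/2}); in particular, f can be chosen with R_0(f) = O(n^{2/3}) and R_0(φ) = Õ(n^{2/3}) while R_0(f_CS(φ)) = Ω̃(n), so the zero-error randomized query complexity of the cheat sheet version can be polynomially larger than R_0(f) + R_0(φ). -/

import Mathlib

open scoped BigOperators ENNReal

namespace QC

/-! ### Inputs and partial functions -/

/-- An input assigns to each index `i` a symbol from the alphabet `Fin (α i)`. -/
abbrev Input (ι : Type) (α : ι → ℕ) := ∀ i : ι, Fin (α i)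

/-- A (possibly partial) Boolean-valued query function; `none` means the input
is outside the promise/domain. -/
abbrev PartialFn (ι : Type) (α : ι → ℕ) := Input ι α → Option Bool

/-- A total function has every input in its domain. -/
def TotalFn {ι : Type} {α : ι → ℕ} (f : PartialFn ι α) : Prop := ∀ x, f x ≠ none

/-- Classical truth value of a proposition, as a `Bool`. -/
noncomputable def ofProp (P : Prop) : Bool := @decide P (Classical.propDecidable P)

/-! ### Decision trees and classical query complexity -/

/-- Decision trees over index set `ι` with alphabets `α` and leaf labels `L`. -/
inductive DTree (ι : Type) (α : ι → ℕ) (L : Type) : Type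
  | leaf : L → DTree ι α L
  | node : (i : ι) → (Fin (α i) → DTree ι α L) → DTree ι α L

namespace DTree

variable {ι : Type} {α : ι → ℕ} {L : Type}

/-- Evaluate a decision tree on an input. -/
def eval : DTree ι α L → Input ι α → L
  | leaf b, _ => b
  | node i child, x => eval (child (x i)) x

/-- The number of queries the tree makes on a given input. -/
def cost : DTree ι α L → Input ι α → ℕ
  | leaf _, _ => 0
  | node i child, x => cost (child (x i)) x + 1

/-- The depth (worst-case number of queries) of a decision tree. -/
def depth : DTree ι α L → ℕ
  | leaf _ => 0
  | node _ child => (Finset.univ.sup fun a => depth (child a)) + 1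

end DTree

variable {ι : Type} {α : ι → ℕ}

/-- Deterministic query complexity `D(f)`. -/
noncomputable def Dq (f : PartialFn ι α) : ℕ :=
  sInf {d | ∃ T : DTree ι α (Option Bool), T.depth ≤ d ∧
    ∀ x b, f x = some b → T.eval x = some b}

/-- Bounded-error randomized query complexity `R(f)` (worst-case queries,
success probability at least 2/3 on every domain input). -/
noncomputable def Rq (f : PartialFn ι α) : ℕ :=
  sInf {d | ∃ μ : PMF (DTree ι α (Option Bool)),
    (∀ T ∈ μ.support, T.depth ≤ d) ∧
    ∀ x b, f x = some b → 2/3 ≤ μ.toOuterMeasure {T | T.eval x = some b}}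

/-- Zero-error randomized query complexity `R₀(f)` (worst-case queries): the
algorithm never errs, and outputs `none` ("don't know") with probability at most 1/2. -/
noncomputable def R0q (f : PartialFn ι α) : ℕ :=
  sInf {d | ∃ μ : PMF (DTree ι α (Option Bool)),
    (∀ T ∈ μ.support, T.depth ≤ d) ∧
    (∀ T ∈ μ.support, ∀ x b, f x = some b → T.eval x = some b ∨ T.eval x = none) ∧
    ∀ x b, f x = some b → μ.toOuterMeasure {T | T.eval x = none} ≤ 1/2}

/-- Zero-error randomized query complexity, measured by the worst-case *expected*
number of queries over domain inputs (value in `ℝ≥0∞`). -/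
noncomputable def R0expq (f : PartialFn ι α) : ℝ≥0∞ :=
  sInf {c | ∃ μ : PMF (DTree ι α (Option Bool)),
    (∀ T ∈ μ.support, ∀ x b, f x = some b → T.eval x = some b ∨ T.eval x = none) ∧
    (∀ x b, f x = some b → μ.toOuterMeasure {T | T.eval x = none} ≤ 1/2) ∧
    (∀ x b, f x = some b → ∑' T, μ T * (T.cost x : ℝ≥0∞) ≤ c)}

/-- One-sided-error randomized query complexity `R₁(f)`: accept every 1-input with
probability at least 2/3, and never accept a 0-input. -/
noncomputable def R1q (f : PartialFn ι α) : ℕ :=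
  sInf {d | ∃ μ : PMF (DTree ι α (Option Bool)),
    (∀ T ∈ μ.support, T.depth ≤ d) ∧
    (∀ x, f x = some true → 2/3 ≤ μ.toOuterMeasure {T | T.eval x = some true}) ∧
    (∀ x, f x = some false → ∀ T ∈ μ.support, T.eval x ≠ some true)}

/-! ### Quantum query complexity -/

/-- The index set of the state space of a quantum query algorithm:
a query register `Σ i, Fin (α i)` together with a workspace register `Fin W`. -/
abbrev QIdx (ι : Type) (α : ι → ℕ) (W : ℕ) := (Σ i : ι, Fin (α i)) × Fin W

variable [Fintype ι] [DecidableEq ι]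

/-- The standard query oracle for input `x`: the permutation matrix sending the basis
vector `|i,a⟩|w⟩` to `|i, a + x i⟩|w⟩` (addition modulo `α i`). -/
noncomputable def oracleMatrix (W : ℕ) (x : Input ι α) :
    Matrix (QIdx ι α W) (QIdx ι α W) ℂ :=
  Matrix.of fun j j' =>
    if j.2 = j'.2 ∧ j.1 = ⟨j'.1.1, j'.1.2 + x j'.1.1⟩ then 1 else 0

/-- The product `U_T · O · U_{T-1} · O ⋯ O · U_0` of unitaries interleaved with oracle
calls, defining a `T`-query quantum algorithm. -/
noncomputable def qProd {τ : Type} [Fintype τ] (U : ℕ → Matrix τ τ ℂ) (Ox : Matrix τ τ ℂ) :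
    ℕ → Matrix τ τ ℂ
  | 0 => U 0
  | t + 1 => U (t + 1) * Ox * qProd U Ox t

/-- A quantum query algorithm: a number `T` of queries, a workspace size `W`,
unitaries `U 0, …, U T`, a unit initial state, and a measurement assigning to each
basis state an output in `Option Bool` (`none` = "don't know"). -/
structure QAlg (ι : Type) [Fintype ι] [DecidableEq ι] (α : ι → ℕ) where
  T : ℕ
  W : ℕ
  U : ℕ → Matrix (QIdx ι α W) (QIdx ι α W) ℂ
  unitary : ∀ t, U t ∈ Matrix.unitaryGroup (QIdx ι α W) ℂ
  init : QIdx ι α W → ℂ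
  init_norm : ∑ j, ‖init j‖ ^ 2 = 1
  out : QIdx ι α W → Option Bool

/-- The final state of a quantum algorithm on input `x`. -/
noncomputable def QAlg.finalState (A : QAlg ι α) (x : Input ι α) : QIdx ι α A.W → ℂ :=
  (qProd A.U (oracleMatrix A.W x) A.T).mulVec A.init

/-- The probability that the algorithm outputs `v` on input `x`. -/
noncomputable def QAlg.outProb (A : QAlg ι α) (x : Input ι α) (v : Option Bool) : ℝ :=
  ∑ j, if A.out j = v then ‖A.finalState x j‖ ^ 2 else 0

/-- Bounded-error quantum query complexity `Q(f)`. -/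
noncomputable def Qq (f : PartialFn ι α) : ℕ :=
  sInf {d | ∃ A : QAlg ι α, A.T ≤ d ∧
    ∀ x b, f x = some b → (2 : ℝ)/3 ≤ A.outProb x (some b)}

/-- Exact quantum query complexity `Q_E(f)`. -/
noncomputable def QEq (f : PartialFn ι α) : ℕ :=
  sInf {d | ∃ A : QAlg ι α, A.T ≤ d ∧
    ∀ x b, f x = some b → A.outProb x (some b) = 1}

/-- One-sided-error quantum query complexity `Q₁(f)`. -/
noncomputable def Q1q (f : PartialFn ι α) : ℕ :=
  sInf {d | ∃ A : QAlg ι α, A.T ≤ d ∧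
    (∀ x, f x = some true → (2 : ℝ)/3 ≤ A.outProb x (some true)) ∧
    (∀ x, f x = some false → A.outProb x (some true) = 0)}

/-- Zero-error quantum query complexity `Q₀(f)`: never wrong, outputs `none`
with probability at most 1/2. -/
noncomputable def Q0q (f : PartialFn ι α) : ℕ :=
  sInf {d | ∃ A : QAlg ι α, A.T ≤ d ∧
    ∀ x b, f x = some b → A.outProb x (some !b) = 0 ∧ A.outProb x none ≤ 1/2}

/-! ### Certificate complexity -/

/-- A partial assignment `ρ` is consistent with an input `x`. -/
def Consistent (ρ : ∀ i : ι, Option (Fin (α i))) (x : Input ι α) : Prop :=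
  ∀ i v, ρ i = some v → x i = v

/-- The number of fixed positions of a partial assignment. -/
noncomputable def certSize (ρ : ∀ i : ι, Option (Fin (α i))) : ℕ :=
  Nat.card {i // (ρ i).isSome}

/-- The certificate complexity of `f` at input `x`: the least size of a partial
assignment consistent with `x` forcing the value `f x` on all domain inputs. -/
noncomputable def CxAt (f : PartialFn ι α) (x : Input ι α) : ℕ :=
  sInf {s | ∃ ρ, Consistent ρ x ∧ (∀ y, Consistent ρ y → f y = none ∨ f y = f x) ∧
    certSize ρ ≤ s}

/-- Certificate complexity `C(f)`. -/
noncomputable def Cq (f : PartialFn ι α) : ℕ :=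
  sSup {s | ∃ x, f x ≠ none ∧ s = CxAt f x}

/-- One-certificate complexity `C¹(f)`. -/
noncomputable def C1q (f : PartialFn ι α) : ℕ :=
  sSup {s | ∃ x, f x = some true ∧ s = CxAt f x}

/-! ### Polynomial degree -/

/-- Exact polynomial degree `deg(f)`: least degree of a real polynomial agreeing
with `f` (as a 0/1 function of the numerical values of the input symbols) on its domain. -/
noncomputable def degq (f : PartialFn ι α) : ℕ :=
  sInf {d | ∃ p : MvPolynomial ι ℝ, p.totalDegree ≤ d ∧
    ∀ x b, f x = some b →
      MvPolynomial.eval (fun i => ((x i : ℕ) : ℝ)) p = if b then 1 else 0}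

/-- Approximate polynomial degree `adeg(f)`: least degree of a real polynomial
approximating `f` pointwise to error 1/3 on its domain. -/
noncomputable def adegq (f : PartialFn ι α) : ℕ :=
  sInf {d | ∃ p : MvPolynomial ι ℝ, p.totalDegree ≤ d ∧
    ∀ x b, f x = some b →
      |MvPolynomial.eval (fun i => ((x i : ℕ) : ℝ)) p - if b then 1 else 0| ≤ 1/3}

end QC
/-! ### Certifying functions and cheat sheets -/

namespace QC

variable {ι : Type} {α : ι → ℕ}

/-- `φ` is a certifying function for the partial function `f`: it accepts `(x, y)`
only when `x` is in the domain of `f` and the first bit of `y` equals `f x`; every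
domain input has some accepted certificate `y`; and the all-zeros `y` is never accepted. -/
def IsCertifying {k : ℕ} (hk : 0 < k) (f : PartialFn ι α)
    (φ : Input ι α → (Fin k → Fin 2) → Bool) : Prop :=
  (∀ x y, f x = none → φ x y = false) ∧
  (∀ x y b, f x = some b → y ⟨0, hk⟩ ≠ (if b then 1 else 0) → φ x y = false) ∧
  (∀ x b, f x = some b → ∃ y, φ x y = true) ∧
  (∀ x, φ x (fun _ => 0) = false)

/-- The index set of the input to a certifying function, viewed as a query function:
the original input together with `k` certificate bits. -/
abbrev CertIdx (ι : Type) (k : ℕ) := ι ⊕ Fin k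

/-- Alphabets for `CertIdx`. -/
def certAlphabet (α : ι → ℕ) (k : ℕ) : CertIdx ι k → ℕ := Sum.elim α fun _ => 2

/-- A certifying function viewed as a total query function on input ⊕ certificate bits. -/
def certFn {k : ℕ} (φ : Input ι α → (Fin k → Fin 2) → Bool) :
    PartialFn (CertIdx ι k) (certAlphabet α k) :=
  fun z => some (φ (fun i => z (Sum.inl i)) (fun q => z (Sum.inr q)))

/-- The index set of the input to the cheat sheet version of a function: `c` copies of
the original input, followed by `2^c` cells each holding `c` certificate strings of `k` bits. -/
abbrev CSIdx (ι : Type) (c k : ℕ) := (Fin c × ι) ⊕ (Fin (2 ^ c) × Fin c × Fin k)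

/-- Alphabets for `CSIdx`. -/
def csAlphabet (α : ι → ℕ) (c k : ℕ) : CSIdx ι c k → ℕ :=
  Sum.elim (fun p => α p.2) fun _ => 2

/-- The `i`-th copy of the original input inside a cheat sheet input. -/
def csX {c k : ℕ} (z : Input (CSIdx ι c k) (csAlphabet α c k)) (i : Fin c) : Input ι α :=
  fun p => z (Sum.inl (i, p))

/-- The `i`-th certificate string in the `ℓ`-th cheat sheet cell. -/
def csY {c k : ℕ} (z : Input (CSIdx ι c k) (csAlphabet α c k)) (ℓ : Fin (2 ^ c))
    (i : Fin c) : Fin k → Fin 2 :=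
  fun q => z (Sum.inr (ℓ, i, q))

/-- The number in `[2^c]` whose binary representation is the bit string `b`. -/
def binToFin (c : ℕ) (b : Fin c → Bool) : Fin (2 ^ c) :=
  ⟨(∑ i, if b i then 2 ^ (i : ℕ) else 0) % 2 ^ c, Nat.mod_lt _ (by positivity)⟩

/-- The defining condition of the cheat sheet function: all `c` copies lie in the
domain of `f`, and the cell addressed by their `f`-values holds certificates
accepted by `φ` for each copy. -/
def CSCond {c k : ℕ} (f : PartialFn ι α) (φ : Input ι α → (Fin k → Fin 2) → Bool)
    (z : Input (CSIdx ι c k) (csAlphabet α c k)) : Prop :=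
  ∃ bvec : Fin c → Bool, (∀ i, f (csX z i) = some (bvec i)) ∧
    ∀ i, φ (csX z i) (csY z (binToFin c bvec) i) = true

/-- The cheat sheet version of `f` with respect to the certifying function `φ`,
with `c` copies of `f`. It is a total function. -/
noncomputable def cheatSheet (c : ℕ) {k : ℕ} (f : PartialFn ι α)
    (φ : Input ι α → (Fin k → Fin 2) → Bool) :
    PartialFn (CSIdx ι c k) (csAlphabet α c k) :=
  fun z => some (ofProp (CSCond f φ z))

/-! ### OR / AND compositions -/

/-- The `OR` function on `m` bits (alphabet `Fin 2`). -/
def orFn (m : ℕ) (z : Fin m → Fin 2) : Fin 2 := if ∃ j, z j = 1 then 1 else 0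

/-- The `AND` function on `m` bits (alphabet `Fin 2`). -/
def andFn (m : ℕ) (z : Fin m → Fin 2) : Fin 2 := if ∀ j, z j = 1 then 1 else 0

/-- The composition `f ∘ OR_m`. -/
def composeOr {n : ℕ} (f : PartialFn (Fin n) fun _ => 2) (m : ℕ) :
    PartialFn (Fin n × Fin m) (fun _ => 2) :=
  fun z => f fun i => orFn m fun j => z (i, j)

/-- The composition `f ∘ AND_m ∘ OR_m`. -/
def composeAndOr {n : ℕ} (f : PartialFn (Fin n) fun _ => 2) (m : ℕ) :
    PartialFn (Fin n × Fin m × Fin m) (fun _ => 2) :=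
  fun z => f fun i => andFn m fun j => orFn m fun l => z (i, j, l)

/-! ### k-SUM, Block k-sum, BKK and its recursive composition -/

/-- The `k`-SUM function on `n` numbers from `[q]`: is there a set of `k` of the
input numbers summing to `0` modulo `q`? -/
noncomputable def kSUMfn (n q k : ℕ) : PartialFn (Fin n) (fun _ => q) :=
  fun x => some (ofProp (∃ S : Finset (Fin n), S.card = k ∧
    (∑ i ∈ S, (x i : ℕ)) % q = 0))

/-- Number of ones in a block of bits. -/
def onesCount {B : ℕ} (z : Fin B → Fin 2) : ℕ := (Finset.univ.filter fun j => z j = 1).card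

/-- The number encoded in binary by a block of bits. -/
def blockVal {B : ℕ} (z : Fin B → Fin 2) : ℕ := ∑ j, if z j = 1 then 2 ^ (j : ℕ) else 0

/-- A block is balanced if it has an equal number of 0s and 1s. -/
def isBalanced {B : ℕ} (z : Fin B → Fin 2) : Prop := 2 * onesCount z = B

/-- Block `k`-sum on `nb` blocks of `B` bits each: value 1 iff there are `k` balanced
blocks whose encoded numbers sum to 0 (mod `2^B`) and every other block has at least
as many 1s as 0s. -/
noncomputable def blockKSumBool (nb B k : ℕ) (z : Fin nb × Fin B → Fin 2) : Bool :=
  ofProp (∃ S : Finset (Fin nb), S.card = k ∧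
    (∀ i ∈ S, isBalanced fun j => z (i, j)) ∧
    (∑ i ∈ S, blockVal fun j => z (i, j)) % 2 ^ B = 0 ∧
    ∀ i ∉ S, B ≤ 2 * onesCount fun j => z (i, j))

/-- The Boolean version of `k`-SUM on `m` numbers of `w` bits each (mod `2^w`). -/
noncomputable def kSumBool (m w k : ℕ) (z : Fin m × Fin w → Fin 2) : Bool :=
  ofProp (∃ S : Finset (Fin m), S.card = k ∧
    (∑ i ∈ S, blockVal fun j => z (i, j)) % 2 ^ w = 0)

/-- Block size of the outer Block `k`-sum in `BKK` on (roughly) `n` outer bits. -/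
def bkkB (n k : ℕ) : ℕ := 10 * k * Nat.log 2 n
/-- Number of blocks of the outer Block `k`-sum in `BKK`. -/
def bkkNB (n k : ℕ) : ℕ := n / bkkB n k
/-- Bits per number of the inner Boolean `k`-SUM in `BKK`. -/
def bkkW (n k : ℕ) : ℕ := k * Nat.log 2 n
/-- Number of numbers of the inner Boolean `k`-SUM in `BKK`. -/
def bkkM (n k : ℕ) : ℕ := n / bkkW n k

/-- The index set of the inputs of `BKK_{n²,k}` (one inner `k`-SUM input bit for
each outer Block `k`-sum input bit; roughly `n²` bits in total). -/
abbrev BKKIdx (n k : ℕ) := (Fin (bkkNB n k) × Fin (bkkB n k)) × (Fin (bkkM n k) × Fin (bkkW n k))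

/-- `BKK_{n²,k}`: Block `k`-sum composed with the Boolean version of `k`-SUM. -/
noncomputable def bkkBool (n k : ℕ) (z : BKKIdx n k → Fin 2) : Bool :=
  blockKSumBool (bkkNB n k) (bkkB n k) k fun ob =>
    if kSumBool (bkkM n k) (bkkW n k) k (fun p => z (ob, p)) then 1 else 0

/-- `BKK_{n²,k}` as a total query function. -/
noncomputable def BKKfn (n k : ℕ) : PartialFn (BKKIdx n k) (fun _ => 2) :=
  fun z => some (bkkBool n k z)

/-- The `d`-fold self-composition of a total Boolean function `g`: a depth-`d` tree
each of whose internal nodes is a copy of `g`; input bits are indexed by root-to-leaf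
paths `Fin d → I`. -/
noncomputable def iterFn {I : Type} (g : (I → Fin 2) → Bool) :
    (d : ℕ) → ((Fin d → I) → Fin 2) → Bool
  | 0, z => decide (z (fun i => i.elim0) = 1)
  | d + 1, z => g fun a => if iterFn g d (fun v => z (Fin.cons a v)) then 1 else 0

/-- The recursion depth used for `RecBKK`: `d = (4/25)·log n / log log n`. -/
def recD (n : ℕ) : ℕ := 4 * Nat.log 2 n / (25 * Nat.log 2 (Nat.log 2 n))

/-- The index set of the inputs of `RecBKK`. -/
abbrev RecIdx (n : ℕ) := Fin (recD n) → BKKIdx n (Nat.log 2 n)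

/-- `RecBKK`: the `recD n`-fold self-composition of `BKK` with `k = log n`. -/
noncomputable def RecBKKfn (n : ℕ) : PartialFn (RecIdx n) (fun _ => 2) :=
  fun z => some (iterFn (bkkBool n (Nat.log 2 n)) (recD n) z)

/-- The nominal input size `N = n^{2d}` of `RecBKK`. -/
def recN (n : ℕ) : ℕ := n ^ (2 * recD n)

end QC
/-!
The partial function reads a matrix with `R = 2 ^ u` rows and `M = 4 ^ u` columns whose entries
hold a flag and a pointer to a column. In its domain one column has all flags one, every other
column has a zero flag, and at least half of the pointers stored at these zeros lead to the all-ones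
column; the value is a bit of the name of that column. Following all pointers of a random column and
scanning the columns they name takes `O(R ^ 2)` queries.
A certificate names the column and one zero in each other column, so it is checked by reading
`R + M` entries: both problems cost `Õ(R ^ 2)`, while the input has `Õ(R ^ 3)` bits.

Against the cheat sheet version, hide one zero per column at a uniformly random row of every copy,
with all pointers null and all cells empty. As long as fewer than half of the hidden zeros have been
found, a valid column with either bit can be planted in every copy and certificates written into a
cell that has not been read, so an errorless algorithm cannot answer yet. Each hidden zero costs
about `R` queries on average, for a total of order `R * M = R ^ 3`.
-/

namespace QC

namespace DTree

variable {ι : Type} {α : ι → ℕ} {L L' : Type}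

/-- The indices queried by a decision tree on a given input, in order. -/
def path : DTree ι α L → Input ι α → List ι
  | leaf _, _ => []
  | node i child, x => i :: path (child (x i)) x

theorem length_path (T : DTree ι α L) (x : Input ι α) : (T.path x).length = T.cost x := by
  induction T with
  | leaf b => rfl
  | node i child ih => simp [path, cost, ih]

theorem cost_le_depth (T : DTree ι α L) (x : Input ι α) : T.cost x ≤ T.depth := by
  induction T with
  | leaf b => simp [cost]
  | node i child ih =>
    have hchild := Finset.le_sup (f := fun a => depth (child a)) (Finset.mem_univ (x i))
    exact Nat.succ_le_succ ((ih (x i)).trans hchild)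

theorem eval_congr (T : DTree ι α L) {x y : Input ι α} (h : ∀ i ∈ T.path x, x i = y i) :
    T.eval y = T.eval x := by
  induction T with
  | leaf b => rfl
  | node i child ih =>
    simp only [path, List.mem_cons, forall_eq_or_imp] at h
    simp only [eval, ← h.1]
    exact ih _ h.2

/-- Sequential composition: run `T`, then the tree selected by the output of `T`. -/
def bind : DTree ι α L → (L → DTree ι α L') → DTree ι α L'
  | leaf b, k => k b
  | node i child, k => node i fun a => bind (child a) k

theorem eval_bind (T : DTree ι α L) (k : L → DTree ι α L') (x : Input ι α) :
    (T.bind k).eval x = (k (T.eval x)).eval x := by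
  induction T with
  | leaf b => rfl
  | node i _ ih => exact ih _

theorem cost_bind (T : DTree ι α L) (k : L → DTree ι α L') (x : Input ι α) :
    (T.bind k).cost x = T.cost x + (k (T.eval x)).cost x := by
  induction T with
  | leaf b => exact (zero_add _).symm
  | node i child ih => simp only [bind, cost, eval, ih, Nat.add_right_comm]

/-- Run the given trees one after the other until one of them produces an output. -/
def firstSome : List (DTree ι α (Option L)) → DTree ι α (Option L)
  | [] => leaf none
  | T :: l => T.bind fun o => o.elim (firstSome l) fun b => leaf (some b)

theorem eval_firstSome (l : List (DTree ι α (Option L))) (x : Input ι α) :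
    (firstSome l).eval x = l.findSome? fun T => T.eval x := by
  induction l with
  | nil => rfl
  | cons T l ih =>
    rw [firstSome, eval_bind, List.findSome?_cons]
    cases T.eval x with
    | none => exact ih
    | some b => rfl

theorem cost_firstSome_le {l : List (DTree ι α (Option L))} {x : Input ι α} {B : ℕ}
    (h : ∀ T ∈ l, T.cost x ≤ B) : (firstSome l).cost x ≤ l.length * B := by
  induction l with
  | nil => exact Nat.zero_le _
  | cons T l ih =>
    rw [List.forall_mem_cons] at h
    rw [firstSome, cost_bind, List.length_cons, Nat.succ_mul, Nat.add_comm]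
    refine Nat.add_le_add ?_ h.1
    cases T.eval x with
    | none => exact ih h.2
    | some b => exact Nat.zero_le _

theorem exists_eval_eq_of_dependsOn [Nonempty L] {F : Input ι α → L} {S : Finset ι}
    (hF : DependsOn F ↑S) : ∃ T : DTree ι α L, ∀ x, T.eval x = F x ∧ T.cost x = S.card := by
  classical
  induction S using Finset.induction_on generalizing F with
  | empty =>
    obtain ⟨b, hb⟩ : ∃ b, ∀ x, F x = b := by
      by_cases hne : Nonempty (Input ι α)
      · obtain ⟨x₀⟩ := hne
        exact ⟨F x₀, fun x => hF (by simp)⟩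
      · exact ⟨Classical.arbitrary L, fun x => absurd ⟨x⟩ hne⟩
    exact ⟨leaf b, fun x => ⟨(hb x).symm, rfl⟩⟩
  | insert i S hi ih =>
    have hchild : ∀ a : Fin (α i), DependsOn (fun x => F (Function.update x i a)) ↑S := by
      intro a x y hxy
      refine hF fun q hq => ?_
      by_cases hqi : q = i
      · subst hqi
        simp
      · rw [Function.update_of_ne hqi, Function.update_of_ne hqi]
        exact hxy q (Finset.mem_of_mem_insert_of_ne (Finset.mem_coe.1 hq) hqi)
    choose child hspec using fun a => ih (hchild a)
    refine ⟨node i child, fun x => ⟨?_, ?_⟩⟩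
    · simpa only [eval, Function.update_eq_self] using (hspec (x i) x).1
    · rw [Finset.card_insert_of_notMem hi, cost, (hspec (x i) x).2]

/-- A tree is errorless for `f` if on every domain input it outputs the value of `f` or
gives up. -/
def Errorless (f : PartialFn ι α) (T : DTree ι α (Option Bool)) : Prop :=
  ∀ x b, f x = some b → T.eval x = some b ∨ T.eval x = none

theorem Errorless.eval_eq_none {f : PartialFn ι α} {T : DTree ι α (Option Bool)}
    (hT : T.Errorless f) {x y : Input ι α} (hx : f x = some false) (hy : f y = some true)
    (hxy : ∀ i ∈ T.path x, x i = y i) : T.eval x = none := by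
  have heq := T.eval_congr hxy
  rcases hT x false hx with hfalse | hnone
  · simpa [heq, hfalse] using hT y true hy
  · exact hnone

end DTree

section QueryBounds

variable {ι : Type} {α : ι → ℕ}

theorem le_Dq_of_fooling [Finite ι] {f : PartialFn ι α} {N : ℕ} (x₀ : Input ι α)
    (h : ∀ S : Finset ι, S.card < N → ∀ b, ∃ x, f x = some b ∧ ∀ i ∈ S, x₀ i = x i) :
    N ≤ Dq f := by
  classical
  have := Fintype.ofFinite ι
  refine le_csInf ?_ ?_
  · obtain ⟨T, hT⟩ := DTree.exists_eval_eq_of_dependsOn (F := f) (S := Finset.univ)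
      fun x y hxy => congrArg f (funext fun i => hxy i (Finset.mem_coe.2 (Finset.mem_univ i)))
    exact ⟨T.depth, T, le_rfl, fun x b hx => (hT x).1.trans hx⟩
  · rintro d ⟨T, hdepth, hT⟩
    by_contra! hlt
    have hcard : (T.path x₀).toFinset.card < N :=
      calc (T.path x₀).toFinset.card ≤ (T.path x₀).length := List.toFinset_card_le _
        _ = T.cost x₀ := T.length_path x₀
        _ ≤ T.depth := T.cost_le_depth x₀
        _ < N := hdepth.trans_lt hlt
    have heval : ∀ b, T.eval x₀ = some b := by
      intro b
      obtain ⟨x, hx, hagree⟩ := h _ hcard b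
      rw [← T.eval_congr fun i hi => hagree i (List.mem_toFinset.2 hi)]
      exact hT x b hx
    exact Bool.false_ne_true (Option.some.inj ((heval false).symm.trans (heval true)))

theorem pmf_tsum_mul_const {Ω : Type*} (μ : PMF Ω) (a : ℝ≥0∞) : ∑' T, μ T * a = a := by
  rw [ENNReal.tsum_mul_right, μ.tsum_coe, one_mul]

theorem pmf_tsum_mul_mono {Ω : Type*} (μ : PMF Ω) {g h : Ω → ℝ≥0∞}
    (hgh : ∀ T ∈ μ.support, g T ≤ h T) : ∑' T, μ T * g T ≤ ∑' T, μ T * h T := by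
  refine ENNReal.tsum_le_tsum fun T => ?_
  by_cases hT : T ∈ μ.support
  · exact mul_le_mul_right (hgh T hT) _
  · simp [(μ.apply_eq_zero_iff T).2 hT]

theorem pmf_le_card_mul_of_average {Ω Θ : Type*} [Fintype Ω] (μ : PMF Θ)
    {g : Θ → Ω → ℝ≥0∞} {a b : ℝ≥0∞} (ha : ∀ T ∈ μ.support, a ≤ ∑ r, g T r)
    (hb : ∀ r, ∑' T, μ T * g T r ≤ b) : a ≤ Fintype.card Ω * b :=
  calc a = ∑' T, μ T * a := (pmf_tsum_mul_const μ a).symm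
    _ ≤ ∑' T, μ T * ∑ r, g T r := pmf_tsum_mul_mono μ ha
    _ = ∑ r, ∑' T, μ T * g T r := by
        simp_rw [Finset.mul_sum]
        exact Summable.tsum_finsetSum fun _ _ => ENNReal.summable
    _ ≤ ∑ _r : Ω, b := Finset.sum_le_sum fun r _ => hb r
    _ = Fintype.card Ω * b := by simp

theorem uniformOfFintype_map_failure_le {J : Type*} [Fintype J] [Nonempty J] {L : Type}
    (T : J → DTree ι α (Option L)) (x : Input ι α)
    (h : 2 * {j | (T j).eval x = none}.ncard ≤ Fintype.card J) :
    ((PMF.uniformOfFintype J).map T).toOuterMeasure {t | t.eval x = none} ≤ 1 / 2 := by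
  classical
  rw [PMF.toOuterMeasure_map_apply, PMF.toOuterMeasure_uniformOfFintype_apply,
    ← Nat.card_eq_fintype_card, Nat.card_coe_set_eq]
  refine ENNReal.div_le_of_le_mul ?_
  rw [one_div, ← ENNReal.mul_le_mul_iff_right (a := 2) (by simp) (by simp), ← mul_assoc,
    ENNReal.mul_inv_cancel (by simp) (by simp), one_mul]
  exact_mod_cast h

theorem R0expq_le_of_family {J : Type} [Fintype J] [Nonempty J] {f : PartialFn ι α}
    (T : J → DTree ι α (Option Bool)) {B : ℕ} (hT : ∀ j, (T j).Errorless f)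
    (hcost : ∀ j x, (T j).cost x ≤ B)
    (hfail : ∀ x, f x ≠ none → 2 * {j | (T j).eval x = none}.ncard ≤ Fintype.card J) :
    R0expq f ≤ B := by
  have hmem : ∀ t ∈ ((PMF.uniformOfFintype J).map T).support, ∃ j, T j = t := by
    intro t ht
    obtain ⟨j, -, hj⟩ := (PMF.mem_support_map_iff _ _ _).1 ht
    exact ⟨j, hj⟩
  refine sInf_le ⟨(PMF.uniformOfFintype J).map T, ?_, ?_, ?_⟩
  · intro t ht
    obtain ⟨j, rfl⟩ := hmem t ht
    exact hT j
  · intro x b hx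
    exact uniformOfFintype_map_failure_le T x (hfail x (by simp [hx]))
  · intro x b _
    rw [← pmf_tsum_mul_const ((PMF.uniformOfFintype J).map T) B]
    refine pmf_tsum_mul_mono _ fun t ht => ?_
    obtain ⟨j, rfl⟩ := hmem t ht
    exact_mod_cast hcost j x

theorem R0expq_le_of_tree {f : PartialFn ι α} (T : DTree ι α (Option Bool)) {B : ℕ}
    (hT : ∀ x, f x ≠ none → T.eval x = f x) (hcost : ∀ x, T.cost x ≤ B) : R0expq f ≤ B := by
  refine R0expq_le_of_family (J := Unit) (fun _ => T) ?_ (fun _ => hcost) ?_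
  · intro _ x b hx
    exact Or.inl ((hT x (by simp [hx])).trans hx)
  · intro x hx
    simp [hT x hx, hx]

theorem R0expq_le_card [Fintype ι] (f : PartialFn ι α) : R0expq f ≤ Fintype.card ι := by
  obtain ⟨T, hT⟩ := DTree.exists_eval_eq_of_dependsOn (F := f) (S := Finset.univ)
    fun x y hxy => congrArg f (funext fun i => hxy i (Finset.mem_coe.2 (Finset.mem_univ i)))
  exact R0expq_le_of_tree T (fun x _ => (hT x).1) fun x => (hT x).2.le

theorem sum_cost_add_giveUp_ge {Ω L : Type} [Fintype Ω] (T : DTree ι α (Option L))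
    (z : Ω → Input ι α) {N : ℕ}
    (h : 4 * {r | T.cost (z r) < N ∧ T.eval (z r) ≠ none}.ncard ≤ Fintype.card Ω) :
    3 * Fintype.card Ω * N ≤
      ∑ r, (4 * T.cost (z r) + 4 * N * if T.eval (z r) = none then 1 else 0) := by
  classical
  rw [Set.ncard_eq_toFinset_card', Set.toFinset_ofPred] at h
  have hr : ∀ r, 4 * N ≤
      (4 * T.cost (z r) + 4 * N * if T.eval (z r) = none then 1 else 0) +
        4 * N * if T.cost (z r) < N ∧ T.eval (z r) ≠ none then 1 else 0 := by
    intro r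
    split_ifs <;> grind
  have hsum := Finset.sum_le_sum fun r (_ : r ∈ Finset.univ) => hr r
  rw [Finset.sum_add_distrib, ← Finset.mul_sum _ _ (4 * N), ← Finset.card_filter,
    Finset.sum_const, Finset.card_univ, smul_eq_mul] at hsum
  nlinarith

/- Minimax: an algorithm gives up with probability at most `1/2`, so on a uniformly
random `z r` it answers after at least `N` queries with probability at least `1/4`. -/
theorem le_four_mul_R0expq_of_hard_family {Ω : Type} [Fintype Ω] [Nonempty Ω] {f : PartialFn ι α}
    (z : Ω → Input ι α) (hz : ∀ r, f (z r) ≠ none) {N : ℕ}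
    (h : ∀ T : DTree ι α (Option Bool), T.Errorless f →
      4 * {r | T.cost (z r) < N ∧ T.eval (z r) ≠ none}.ncard ≤ Fintype.card Ω) :
    (N : ℝ≥0∞) ≤ 4 * R0expq f := by
  classical
  rw [mul_comm, ← ENNReal.div_le_iff_le_mul (by simp) (by simp)]
  refine le_sInf ?_
  rintro c ⟨μ, herrorless, hfail, hcost⟩
  refine ENNReal.div_le_of_le_mul ?_
  have hΩ : (Fintype.card Ω : ℝ≥0∞) ≠ 0 := by simp
  have haverage : (3 * Fintype.card Ω * N : ℝ≥0∞) ≤ Fintype.card Ω * (4 * c + 4 * N * (1 / 2)) := by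
    refine pmf_le_card_mul_of_average μ (g := fun T r =>
      4 * T.cost (z r) + 4 * N * if T.eval (z r) = none then 1 else 0) ?_ ?_
    · intro T hT
      exact_mod_cast sum_cost_add_giveUp_ge T z (h T (herrorless T hT))
    · intro r
      obtain ⟨b, hb⟩ := Option.ne_none_iff_exists'.1 (hz r)
      simp_rw [mul_add, mul_left_comm (μ _)]
      rw [ENNReal.tsum_add, ENNReal.tsum_mul_left, ENNReal.tsum_mul_left]
      gcongr
      · exact hcost _ b hb
      · refine le_of_eq_of_le ?_ (hfail _ b hb)
        rw [PMF.toOuterMeasure_apply]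
        simp [Set.indicator_apply]
  have hcancel : (N : ℝ≥0∞) + 2 * N ≤ c * 4 + 2 * N := by
    rw [← ENNReal.mul_le_mul_iff_right hΩ (by simp)]
    calc (Fintype.card Ω * (N + 2 * N) : ℝ≥0∞) = 3 * Fintype.card Ω * N := by ring
      _ ≤ _ := haverage
      _ = Fintype.card Ω * (c * 4 + 2 * (2 * (1 / 2)) * N) := by ring
      _ = _ := by rw [one_div, ENNReal.mul_inv_cancel (by simp) (by simp), mul_one]
  exact (ENNReal.add_le_add_iff_right (by finiteness)).1 hcancel

end QueryBounds

section HiddenPositions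

variable {ι : Type} {α : ι → ℕ} {L Row Col : Type}

open Classical in
/-- The input with hidden position `r j` in each column `j`: where `pos` maps an index to its row
and column, the input agrees with `hit` at the hidden positions and with `miss` elsewhere. -/
noncomputable def hiddenInput (pos : ι → Option (Row × Col)) (hit miss : Input ι α)
    (r : Col → Row) : Input ι α :=
  fun i => if ∃ j, pos i = some (r j, j) then hit i else miss i

open Classical in
/-- The row of an index lying in column `j`. -/
noncomputable def rowIn (pos : ι → Option (Row × Col)) (j : Col) (i : ι) : Option Row :=
  (pos i).bind fun p => if p.2 = j then some p.1 else none

theorem rowIn_eq_some {pos : ι → Option (Row × Col)} {j : Col} {i : ι} {ρ : Row} :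
    rowIn pos j i = some ρ ↔ pos i = some (ρ, j) := by
  cases h : pos i with
  | none => simp [rowIn, h]
  | some p =>
    by_cases hj : p.2 = j <;> simp [rowIn, h, hj, Prod.ext_iff]

theorem DTree.mem_take_filterMap_path {T : DTree ι α L} {x y : Input ι α} {g : ι → Option Row}
    {ρ : Row} {m : ℕ} (hxy : ∀ i, g i ≠ some ρ → x i = y i)
    (hρ : ρ ∈ ((T.path x).filterMap g).take m) : ρ ∈ ((T.path y).filterMap g).take m := by
  induction T generalizing m with
  | leaf b => exact hρ
  | node i child ih =>
    by_cases hi : g i = some ρ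
    · cases m with
      | zero => simp at hρ
      | succ m => simp [path, hi]
    · rw [path, hxy i hi] at hρ
      rw [path]
      cases hg : g i with
      | none =>
        simp only [List.filterMap_cons, hg] at hρ ⊢
        exact ih _ hρ
      | some a =>
        cases m with
        | zero => simp at hρ
        | succ m =>
          simp only [List.filterMap_cons, hg, List.take_succ_cons, List.mem_cons] at hρ ⊢
          exact hρ.imp_right (ih _)

theorem hiddenInput_update_of_rowIn_ne [DecidableEq Col] {pos : ι → Option (Row × Col)}
    {hit miss : Input ι α} {r : Col → Row} {j : Col} {ρ : Row} {i : ι}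
    (hi : rowIn pos j i ≠ some ρ) :
    hiddenInput pos hit miss (Function.update r j ρ) i =
      if (rowIn pos j i).isNone then hiddenInput pos hit miss r i else miss i := by
  classical
  cases hrow : rowIn pos j i with
  | none =>
    have hcol : ∀ a, pos i ≠ some (a, j) := fun a ha => by simp [rowIn_eq_some.2 ha] at hrow
    simp only [Option.isNone_none, if_true, hiddenInput]
    refine if_congr (exists_congr fun j' => ?_) rfl rfl
    by_cases hj' : j' = j
    · subst hj'
      simp [hcol]
    · rw [Function.update_of_ne hj']
  | some a =>
    have ha : a ≠ ρ := fun h => hi (h ▸ hrow)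
    refine if_neg ?_
    rintro ⟨j', hj'⟩
    rw [rowIn_eq_some.1 hrow, Option.some.injEq, Prod.mk.injEq] at hj'
    obtain ⟨rfl, rfl⟩ := hj'
    simp at ha

/- Until the hidden position of column `j` is queried, the run of `T` cannot depend on it. -/
theorem ncard_mem_take_rowIn_path_le [DecidableEq Col]
    (T : DTree ι α L) (pos : ι → Option (Row × Col)) (hit miss : Input ι α) (r : Col → Row)
    (j : Col) (m : ℕ) :
    {ρ | ρ ∈ ((T.path (hiddenInput pos hit miss
      (Function.update r j ρ))).filterMap (rowIn pos j)).take m}.ncard ≤ m := by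
  classical
  let y : Input ι α := fun i =>
    if (rowIn pos j i).isNone then hiddenInput pos hit miss r i else miss i
  calc _ ≤ ((((T.path y).filterMap (rowIn pos j)).take m).toFinset : Set Row).ncard := by
        refine Set.ncard_le_ncard (fun ρ hρ => ?_) (Finset.finite_toSet _)
        rw [Finset.mem_coe, List.mem_toFinset]
        exact DTree.mem_take_filterMap_path (fun i hi => hiddenInput_update_of_rowIn_ne hi) hρ
    _ ≤ m := by
        rw [Set.ncard_coe_finset]
        exact (List.toFinset_card_le _).trans (List.length_take_le _ _)

theorem sum_sum_update {β : Col → Type*} {M : Type*} [Fintype Col] [DecidableEq Col]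
    [∀ j, Fintype (β j)] [AddCommMonoid M] (g : (∀ j, β j) → M) (j : Col) :
    ∑ r, ∑ b, g (Function.update r j b) = Fintype.card (β j) • ∑ r, g r := by
  have hswap : Function.Involutive
      fun p : (∀ j, β j) × β j => (Function.update p.1 j p.2, p.1 j) := by
    rintro ⟨r, b⟩
    simp
  calc ∑ r, ∑ b, g (Function.update r j b)
      = ∑ p : (∀ j, β j) × β j, g (Function.update p.1 j p.2) :=
        (Fintype.sum_prod_type' fun r b => g (Function.update r j b)).symm
    _ = ∑ p : (∀ j, β j) × β j, g p.1 := Fintype.sum_equiv hswap.toPerm _ _ fun _ => rfl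
    _ = ∑ _b : β j, ∑ r, g r := Fintype.sum_prod_type_right _
    _ = Fintype.card (β j) • ∑ r, g r := by rw [Finset.sum_const, Finset.card_univ]

open Classical in
/-- The columns whose hidden position is among the first `m` positions of that column in `l`. -/
noncomputable def earlyHits [Fintype Col] (pos : ι → Option (Row × Col)) (r : Col → Row) (m : ℕ)
    (l : List ι) : Finset Col :=
  Finset.univ.filter fun j => r j ∈ (l.filterMap (rowIn pos j)).take m

open Classical in
/-- The columns whose hidden position occurs in `l`. -/
noncomputable def found [Fintype Col] (pos : ι → Option (Row × Col)) (r : Col → Row)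
    (l : List ι) : Finset Col :=
  Finset.univ.filter fun j => ∃ i ∈ l, pos i = some (r j, j)

theorem mem_found [Fintype Col] {pos : ι → Option (Row × Col)} {r : Col → Row} {l : List ι}
    {j : Col} : j ∈ found pos r l ↔ ∃ i ∈ l, pos i = some (r j, j) := by
  simp [found]

theorem sum_card_earlyHits_le [Fintype Row] [Fintype Col] [DecidableEq Col]
    (T : DTree ι α L) (pos : ι → Option (Row × Col)) (hit miss : Input ι α) (m : ℕ) :
    Fintype.card Row * ∑ r, (earlyHits pos r m (T.path (hiddenInput pos hit miss r))).card ≤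
      m * Fintype.card Col * Fintype.card (Col → Row) := by
  classical
  have hcol : ∀ j, Fintype.card Row * ∑ r : Col → Row,
      (if j ∈ earlyHits pos r m (T.path (hiddenInput pos hit miss r)) then 1 else 0) ≤
        m * Fintype.card (Col → Row) := by
    intro j
    rw [← smul_eq_mul, ← sum_sum_update (β := fun _ => Row) _ j, mul_comm m, ← smul_eq_mul,
      ← Finset.card_univ, ← Finset.sum_const]
    refine Finset.sum_le_sum fun r _ => ?_
    have hρ := ncard_mem_take_rowIn_path_le T pos hit miss r j m
    rw [Set.ncard_eq_toFinset_card', Set.toFinset_ofPred, Finset.card_filter] at hρ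
    simpa only [earlyHits, Finset.mem_filter, Finset.mem_univ, true_and,
      Function.update_self] using hρ
  calc _ = ∑ j, Fintype.card Row * ∑ r : Col → Row,
        (if j ∈ earlyHits pos r m (T.path (hiddenInput pos hit miss r)) then 1 else 0) := by
        rw [← Finset.mul_sum, Finset.sum_comm]
        simp
    _ ≤ ∑ _j : Col, m * Fintype.card (Col → Row) := Finset.sum_le_sum fun j _ => hcol j
    _ = _ := by rw [Finset.sum_const, Finset.card_univ, smul_eq_mul]; ring

theorem sum_length_filterMap_rowIn_le [Fintype Col] (pos : ι → Option (Row × Col)) (l : List ι) :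
    ∑ j, (l.filterMap (rowIn pos j)).length ≤ l.length := by
  classical
  induction l with
  | nil => simp
  | cons i l ih =>
    have hcons : ∀ j, ((i :: l).filterMap (rowIn pos j)).length ≤
        (if (pos i).map Prod.snd = some j then 1 else 0) +
          (l.filterMap (rowIn pos j)).length := by
      intro j
      cases hj : rowIn pos j i with
      | none => simp [hj]
      | some ρ => simp [hj, rowIn_eq_some.1 hj, add_comm]
    refine (Finset.sum_le_sum fun j _ => hcons j).trans ?_
    rw [Finset.sum_add_distrib, List.length_cons, add_comm]
    refine Nat.add_le_add ih ?_
    cases (pos i).map Prod.snd <;> simp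

theorem mul_card_found_le [Fintype Col] (pos : ι → Option (Row × Col)) (r : Col → Row) (m : ℕ)
    (l : List ι) :
    m * (found pos r l).card ≤ m * (earlyHits pos r m l).card + l.length := by
  classical
  have hcol : ∀ j, (if j ∈ found pos r l then m else 0) ≤
      (if j ∈ earlyHits pos r m l then m else 0) + (l.filterMap (rowIn pos j)).length := by
    intro j
    by_cases hlate : j ∈ found pos r l ∧ j ∉ earlyHits pos r m l
    · obtain ⟨i, hil, hi⟩ := mem_found.1 hlate.1
      have hmem : r j ∈ l.filterMap (rowIn pos j) :=
        List.mem_filterMap.2 ⟨i, hil, rowIn_eq_some.2 hi⟩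
      have hlen : m ≤ (l.filterMap (rowIn pos j)).length := by
        by_contra! hlt
        refine hlate.2 (Finset.mem_filter.2 ⟨Finset.mem_univ _, ?_⟩)
        rwa [List.take_of_length_le hlt.le]
      split_ifs <;> omega
    · split_ifs <;> simp_all
  have hsum := Finset.sum_le_sum fun j (_ : j ∈ Finset.univ) => hcol j
  simp only [Finset.sum_add_distrib, Finset.sum_ite_mem, Finset.univ_inter, Finset.sum_const,
    smul_eq_mul] at hsum
  rw [mul_comm m, mul_comm m]
  exact hsum.trans (Nat.add_le_add_left (sum_length_filterMap_rowIn_le pos l) _)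

theorem card_mul_ncard_found_le [Fintype Row] [Fintype Col] [DecidableEq Col]
    (T : DTree ι α L) (pos : ι → Option (Row × Col)) (hit miss : Input ι α) (m Q : ℕ) :
    Fintype.card Row * (Q * {r | T.cost (hiddenInput pos hit miss r) < m * Q ∧
        2 * Q ≤ (found pos r (T.path (hiddenInput pos hit miss r))).card}.ncard) ≤
      m * Fintype.card Col * Fintype.card (Col → Row) := by
  classical
  refine le_trans (Nat.mul_le_mul_left _ ?_) (sum_card_earlyHits_le T pos hit miss m)
  rw [Set.ncard_eq_toFinset_card', Set.toFinset_ofPred, mul_comm, ← smul_eq_mul]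
  refine (Finset.card_nsmul_le_sum _ _ _ fun r hr => ?_).trans
    (Finset.sum_le_sum_of_subset (Finset.subset_univ _))
  obtain ⟨hcost, hfound⟩ := (Finset.mem_filter.1 hr).2
  have hle := mul_card_found_le pos r m (T.path (hiddenInput pos hit miss r))
  rw [DTree.length_path] at hle
  have hmul := Nat.mul_le_mul_left m hfound
  refine (lt_of_mul_lt_mul_left (a := m) ?_ (Nat.zero_le m)).le
  linarith

end HiddenPositions

section CheatSheet

variable {ι : Type} {α : ι → ℕ} {k : ℕ} {hk : 0 < k} {f : PartialFn ι α}
  {φ : Input ι α → (Fin k → Fin 2) → Bool}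

theorem ofProp_eq_true {P : Prop} : ofProp P = true ↔ P := by simp [ofProp]

theorem ofProp_eq_false {P : Prop} : ofProp P = false ↔ ¬P := by simp [ofProp]

theorem R0expq_certFn_le {B : ℕ}
    (hφ : ∀ y, ∃ S : Finset ι, S.card ≤ B ∧ DependsOn (fun x => φ x y) ↑S) :
    R0expq (certFn φ) ≤ (k + B : ℕ) := by
  classical
  obtain ⟨readCert, hread⟩ := DTree.exists_eval_eq_of_dependsOn
    (L := Fin k → Fin 2) (F := fun (z : Input (CertIdx ι k) (certAlphabet α k)) q => z (.inr q))
    (S := Finset.univ.image Sum.inr) fun z z' h => funext fun q => h (.inr q) (by simp)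
  have hverify : ∀ y, ∃ T : DTree (CertIdx ι k) (certAlphabet α k) (Option Bool), ∀ z,
      T.eval z = some (φ (fun i => z (.inl i)) y) ∧ T.cost z ≤ B := by
    intro y
    obtain ⟨S, hS, hdep⟩ := hφ y
    obtain ⟨T, hT⟩ := DTree.exists_eval_eq_of_dependsOn
      (F := fun z : Input (CertIdx ι k) (certAlphabet α k) => some (φ (fun i => z (.inl i)) y))
      (S := S.image Sum.inl) fun z z' h =>
        congrArg some (hdep fun i hi => h (.inl i) (by simpa using hi))
    exact ⟨T, fun z => ⟨(hT z).1, (hT z).2.trans_le (Finset.card_image_le.trans hS)⟩⟩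
  choose verify hverify using hverify
  refine R0expq_le_of_tree (readCert.bind verify) (fun z _ => ?_) fun z => ?_
  · rw [DTree.eval_bind, (hverify _ z).1, (hread z).1]
    rfl
  · rw [DTree.cost_bind, (hread z).2]
    refine Nat.add_le_add (Finset.card_image_le.trans ?_) (hverify _ z).2
    simp

theorem binToFin_surjective (c : ℕ) : Function.Surjective (binToFin c) := by
  intro ℓ
  refine ⟨fun i => decide (finFunctionFinEquiv.symm ℓ i = 1), Fin.ext ?_⟩
  have hdigits : (∑ i : Fin c, if decide (finFunctionFinEquiv.symm ℓ i = 1) then 2 ^ (i : ℕ)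
      else 0) = (ℓ : ℕ) := by
    conv_rhs => rw [← finFunctionFinEquiv.apply_symm_apply ℓ, finFunctionFinEquiv_apply]
    refine Finset.sum_congr rfl fun i _ => ?_
    generalize finFunctionFinEquiv.symm ℓ i = a
    fin_cases a <;> simp
  exact (Nat.mod_eq_of_lt (hdigits.trans_lt ℓ.2)).trans hdigits

/-- The cheat sheet input with copies `x` of the original input and cells `Y`. -/
def csInput {c : ℕ} (x : Fin c → Input ι α) (Y : Fin (2 ^ c) → Fin c → Fin k → Fin 2) :
    Input (CSIdx ι c k) (csAlphabet α c k)
  | .inl p => x p.1 p.2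
  | .inr q => Y q.1 q.2.1 q.2.2

theorem IsCertifying.not_csCond (h : IsCertifying hk f φ) {c : ℕ} (hc : 0 < c)
    (x : Fin c → Input ι α) : ¬CSCond f φ (csInput x 0) := by
  rintro ⟨b, -, hφ⟩
  exact Bool.false_ne_true ((h.2.2.2 (x ⟨0, hc⟩)).symm.trans (hφ ⟨0, hc⟩))

theorem exists_cell_notMem {c : ℕ} {l : List (CSIdx ι c k)} (hl : l.length < 2 ^ c) :
    ∃ ℓ, ∀ i q, Sum.inr (ℓ, i, q) ∉ l := by
  classical
  have hcard : (l.filterMap (Sum.elim (fun _ => none) fun q => some q.1)).toFinset.card <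
      (Finset.univ : Finset (Fin (2 ^ c))).card := by
    rw [Finset.card_univ, Fintype.card_fin]
    exact ((List.toFinset_card_le _).trans (List.length_filterMap_le _ _)).trans_lt hl
  obtain ⟨ℓ, -, hℓ⟩ := Finset.exists_mem_notMem_of_card_lt_card hcard
  refine ⟨ℓ, fun i q hq => hℓ ?_⟩
  exact List.mem_toFinset.2 (List.mem_filterMap.2 ⟨_, hq, rfl⟩)

/- Plant, in each copy, an input whose value is the corresponding bit of the name of an unqueried
cell, and fill that cell with certificates. -/
theorem IsCertifying.exists_csCond (h : IsCertifying hk f φ) {c : ℕ} {l : List (CSIdx ι c k)}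
    (hl : l.length < 2 ^ c) (x₀ : Fin c → Input ι α)
    (hx : ∀ i b, ∃ x, f x = some b ∧ ∀ q, Sum.inl (i, q) ∈ l → x₀ i q = x q) :
    ∃ z, CSCond f φ z ∧ ∀ q ∈ l, csInput x₀ 0 q = z q := by
  obtain ⟨ℓ, hℓ⟩ := exists_cell_notMem hl
  obtain ⟨b, rfl⟩ := binToFin_surjective c ℓ
  choose x hfx hagree using fun i => hx i (b i)
  choose y hy using fun i => h.2.2.1 (x i) (b i) (hfx i)
  let Y : Fin (2 ^ c) → Fin c → Fin k → Fin 2 := Function.update 0 (binToFin c b) y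
  have hY : Y (binToFin c b) = y := Function.update_self ..
  refine ⟨csInput x Y, ⟨b, hfx, fun i => ?_⟩, ?_⟩
  · change φ (x i) (Y (binToFin c b) i) = true
    rw [hY]
    exact hy i
  · rintro (⟨i, q⟩ | ⟨ℓ, i, q⟩) hq
    · exact hagree i q hq
    · have hne : ℓ ≠ binToFin c b := by
        rintro rfl
        exact hℓ i q hq
      have hempty : Y ℓ = 0 := Function.update_of_ne hne ..
      exact (congrFun₂ hempty i q).symm

theorem IsCertifying.eval_cheatSheet_eq_none (h : IsCertifying hk f φ) {c : ℕ} (hc : 0 < c)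
    {T : DTree (CSIdx ι c k) (csAlphabet α c k) (Option Bool)}
    (hT : T.Errorless (cheatSheet c f φ)) (x₀ : Fin c → Input ι α)
    (hcost : T.cost (csInput x₀ 0) < 2 ^ c)
    (hx : ∀ i b, ∃ x, f x = some b ∧
      ∀ q, Sum.inl (i, q) ∈ T.path (csInput x₀ 0) → x₀ i q = x q) :
    T.eval (csInput x₀ 0) = none := by
  rw [← T.length_path] at hcost
  obtain ⟨z, hz, hagree⟩ := h.exists_csCond hcost x₀ hx
  exact hT.eval_eq_none (congrArg some (ofProp_eq_false.2 (h.not_csCond hc x₀)))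
    (congrArg some (ofProp_eq_true.2 hz)) hagree

theorem IsCertifying.one_le_four_mul_R0expq_cheatSheet (h : IsCertifying hk f φ) {c : ℕ}
    (hc : 0 < c) (hf : ∀ b, ∃ x, f x = some b) : 1 ≤ 4 * R0expq (cheatSheet c f φ) := by
  obtain ⟨x₀, -⟩ := hf true
  have hle := le_four_mul_R0expq_of_hard_family (f := cheatSheet c f φ) (Ω := Unit) (N := 1)
    (fun _ => csInput (fun _ => x₀) 0) (fun _ => by simp [cheatSheet]) fun T hT => ?_
  · simpa using hle
  · have hempty : {_r : Unit | T.cost (csInput (fun _ => x₀) 0) < 1 ∧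
        T.eval (csInput (fun _ => x₀) 0) ≠ none} = ∅ := by
      refine Set.eq_empty_of_forall_notMem ?_
      rintro _ ⟨hcost, hne⟩
      have hpath : T.path (csInput (fun _ => x₀) 0) = [] := by
        rw [← List.length_eq_zero_iff, T.length_path]
        omega
      refine hne (h.eval_cheatSheet_eq_none hc hT _ (hcost.trans (Nat.one_lt_two_pow hc.ne'))
        fun i b => ?_)
      obtain ⟨x, hx⟩ := hf b
      exact ⟨x, hx, by simp [hpath]⟩
    rw [hempty, Set.ncard_empty]
    exact Nat.zero_le _

end CheatSheet

/-- Names of the `2 ^ (w + 1)` columns of a matrix. -/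
abbrev Column (w : ℕ) := Fin (w + 1) → Fin 2

/-- The bits of a matrix with `R` rows: the entry in row `i` and column `j` consists of a flag
`(i, j, none)` and of the bits `(i, j, some t)` of the name of a column. -/
abbrev MatrixBit (R w : ℕ) := Fin R × Column w × Option (Fin (w + 1))

theorem card_column (w : ℕ) : Fintype.card (Column w) = 2 ^ (w + 1) := by simp

/-- The column whose name is stored in row `i` and column `j`. -/
def pointer {R w : ℕ} (A : MatrixBit R w → Fin 2) (i : Fin R) (j : Column w) : Column w :=
  fun t => A (i, j, some t)

/-- All flags in the column `j` are `1`. -/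
def AllOnes {R w : ℕ} (A : MatrixBit R w → Fin 2) (j : Column w) : Prop :=
  ∀ i, A (i, j, none) = 1

/-- The pair `(j, pos)` witnesses that `A` lies in the domain of `pointerFn`: `j` is the unique
column with all flags `1`, a flag `0` of any other column `j'` sits in row `pos j'`, and at least
half of the pointers stored at these positions lead to `j`. -/
structure IsWitness {R w : ℕ} (A : MatrixBit R w → Fin 2) (j : Column w)
    (pos : Column w → Fin R) : Prop where
  allOnes : AllOnes A j
  flag_eq_zero : ∀ j' ≠ j, A (pos j', j', none) = 0
  half_le : 2 ^ (w + 1) ≤ 2 * {j' | pointer A (pos j') j' = j}.ncard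

/-- The first bit of the name of a column. -/
def columnBit {w : ℕ} (j : Column w) : Bool := decide (j 0 = 1)

open Classical in
/-- The partial function mapping a matrix with a witness `(j, pos)` to `columnBit j`. The matrix
is read off the input through `e`, which allows for padding. -/
noncomputable def pointerFn {R w : ℕ} {ι : Type} (e : MatrixBit R w → ι) :
    PartialFn ι fun _ => 2 := fun x =>
  if h : ∃ j pos, IsWitness (fun p => x (e p)) j pos then some (columnBit h.choose) else none

/-- The certificate of a witness `(j, pos)`: the value `columnBit j`, a bit `1` distinguishing it
from the empty certificate, and an encoding of the pair. -/
def encodeWitness {R w M : ℕ} (E : Column w × (Column w → Fin R) → Fin M → Fin 2)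
    (p : Column w × (Column w → Fin R)) : Fin (M + 2) → Fin 2 :=
  Fin.cons (p.1 0) (Fin.cons 1 (E p))

/-- The certifying function for `pointerFn e` that accepts the encodings of witnesses. -/
noncomputable def pointerCert {R w M : ℕ} {ι : Type} (e : MatrixBit R w → ι)
    (E : Column w × (Column w → Fin R) → Fin M → Fin 2) (x : Input ι fun _ => 2)
    (y : Fin (M + 2) → Fin 2) : Bool :=
  ofProp (∃ p, encodeWitness E p = y ∧ IsWitness (fun q => x (e q)) p.1 p.2)

section Pointer

variable {R w M : ℕ} {ι : Type}

theorem IsWitness.eq_of_allOnes {A : MatrixBit R w → Fin 2} {j j' : Column w}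
    {pos : Column w → Fin R} (h : IsWitness A j pos) (hj' : AllOnes A j') : j' = j := by
  by_contra hne
  exact zero_ne_one ((h.flag_eq_zero j' hne).symm.trans (hj' (pos j')))

theorem IsWitness.congr {A B : MatrixBit R w → Fin 2} {j : Column w} {pos : Column w → Fin R}
    (h : IsWitness A j pos) (hflags : ∀ i, A (i, j, none) = B (i, j, none))
    (hentries : ∀ j' t, A (pos j', j', t) = B (pos j', j', t)) : IsWitness B j pos := by
  have hpointer : ∀ j', pointer A (pos j') j' = pointer B (pos j') j' := fun j' =>
    funext fun t => hentries j' (some t)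
  refine ⟨fun i => (hflags i).symm.trans (h.allOnes i),
    fun j' hj' => (hentries j' none).symm.trans (h.flag_eq_zero j' hj'), ?_⟩
  simpa only [hpointer] using h.half_le

theorem pointerFn_eq_some_iff {e : MatrixBit R w → ι} {x : Input ι fun _ => 2} {b : Bool} :
    pointerFn e x = some b ↔ ∃ j pos, IsWitness (fun p => x (e p)) j pos ∧ columnBit j = b := by
  constructor
  · intro h
    by_cases hex : ∃ j pos, IsWitness (fun p => x (e p)) j pos
    · obtain ⟨pos, hpos⟩ := hex.choose_spec
      exact ⟨_, pos, hpos, by simpa [pointerFn, hex] using h⟩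
    · simp [pointerFn, hex] at h
  · rintro ⟨j, pos, hj, rfl⟩
    have hex : ∃ j pos, IsWitness (fun p => x (e p)) j pos := ⟨j, pos, hj⟩
    obtain ⟨pos', hpos'⟩ := hex.choose_spec
    rw [pointerFn, dif_pos hex, hj.eq_of_allOnes hpos'.allOnes]

theorem isCertifying_pointerCert (e : MatrixBit R w → ι)
    (E : Column w × (Column w → Fin R) → Fin M → Fin 2) :
    IsCertifying (Nat.succ_pos (M + 1)) (pointerFn e) (pointerCert e E) := by
  refine ⟨?_, ?_, ?_, ?_⟩
  · intro x y hx
    refine ofProp_eq_false.2 ?_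
    rintro ⟨p, -, hp⟩
    simp [pointerFn_eq_some_iff.2 ⟨_, _, hp, rfl⟩] at hx
  · intro x y b hx hy
    refine ofProp_eq_false.2 ?_
    rintro ⟨p, rfl, hp⟩
    rw [pointerFn_eq_some_iff.2 ⟨_, _, hp, rfl⟩, Option.some.injEq] at hx
    refine hy ?_
    change p.1 0 = _
    subst hx
    simp only [columnBit, decide_eq_true_eq]
    split_ifs <;> omega
  · intro x b hx
    obtain ⟨j, pos, hj, -⟩ := pointerFn_eq_some_iff.1 hx
    exact ⟨_, ofProp_eq_true.2 ⟨(j, pos), rfl, hj⟩⟩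
  · intro x
    refine ofProp_eq_false.2 ?_
    rintro ⟨p, h, -⟩
    exact one_ne_zero (α := Fin 2) (congrFun h 1)

theorem exists_probe (e : MatrixBit R w → ι) (i : Fin R) (j : Column w) :
    ∃ T : DTree ι (fun _ => 2) (Option Bool), ∀ x,
      T.eval x = (if ofProp (AllOnes (fun p => x (e p)) (pointer (fun p => x (e p)) i j)) then
        some (columnBit (pointer (fun p => x (e p)) i j)) else none) ∧
      T.cost x ≤ w + 1 + R := by
  classical
  obtain ⟨follow, hfollow⟩ := DTree.exists_eval_eq_of_dependsOn
    (F := fun x : Input ι fun _ => 2 => pointer (fun p => x (e p)) i j)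
    (S := Finset.univ.image fun t => e (i, j, some t))
    fun x y h => funext fun t => h _ (by simp)
  have hcheck : ∀ j', ∃ T : DTree ι (fun _ => 2) (Option Bool), ∀ x,
      T.eval x = (if ofProp (AllOnes (fun p => x (e p)) j') then some (columnBit j') else none) ∧
      T.cost x ≤ R := by
    intro j'
    obtain ⟨T, hT⟩ := DTree.exists_eval_eq_of_dependsOn
      (F := fun x : Input ι fun _ => 2 =>
        if ofProp (AllOnes (fun p => x (e p)) j') then some (columnBit j') else none)
      (S := Finset.univ.image fun i' => e (i', j', none))
      fun x y h => by
        have hflags : ∀ i', x (e (i', j', none)) = y (e (i', j', none)) := fun i' => h _ (by simp)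
        have hall : AllOnes (fun p => x (e p)) j' = AllOnes (fun p => y (e p)) j' := by
          simp only [AllOnes, hflags]
        simp only [hall]
    refine ⟨T, fun x => ⟨(hT x).1, (hT x).2.trans_le (Finset.card_image_le.trans ?_)⟩⟩
    simp
  choose check hcheck using hcheck
  refine ⟨follow.bind check, fun x => ⟨?_, ?_⟩⟩
  · rw [DTree.eval_bind, (hcheck _ x).1, (hfollow x).1]
  · rw [DTree.cost_bind, (hfollow x).2]
    refine Nat.add_le_add (Finset.card_image_le.trans ?_) (hcheck _ x).2
    simp

/- Following all pointers of a uniformly random column finds the column of ones whenever the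
pointer stored at the zero flag is one of the at least half that lead there. -/
theorem R0expq_pointerFn_le (e : MatrixBit R w → ι) :
    R0expq (pointerFn e) ≤ (R * (w + 1 + R) : ℕ) := by
  choose probe hprobe using exists_probe e
  refine R0expq_le_of_family (J := Column w)
    (fun j => DTree.firstSome ((List.finRange R).map fun i => probe i j)) ?_ ?_ ?_
  · intro j x b hx
    obtain ⟨j₀, pos, hw, rfl⟩ := pointerFn_eq_some_iff.1 hx
    rw [DTree.eval_firstSome]
    refine (Option.eq_none_or_eq_some _).symm.imp_left ?_
    rintro ⟨b, hb⟩
    obtain ⟨T, hT, hTb⟩ := List.exists_of_findSome?_eq_some hb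
    obtain ⟨i, -, rfl⟩ := List.mem_map.1 hT
    rw [(hprobe i j x).1] at hTb
    by_cases hall : ofProp (AllOnes (fun p => x (e p)) (pointer (fun p => x (e p)) i j)) = true
    · rw [if_pos hall, hw.eq_of_allOnes (ofProp_eq_true.1 hall)] at hTb
      rw [hb, hTb]
    · simp [hall] at hTb
  · intro j x
    refine (DTree.cost_firstSome_le (B := w + 1 + R) ?_).trans_eq (by simp)
    rw [List.forall_mem_map]
    exact fun i _ => (hprobe i j x).2
  · intro x hx
    obtain ⟨b, hb⟩ := Option.ne_none_iff_exists'.1 hx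
    obtain ⟨j₀, pos, hw, -⟩ := pointerFn_eq_some_iff.1 hb
    have hsub : {j | (DTree.firstSome ((List.finRange R).map fun i => probe i j)).eval x = none} ⊆
        {j | pointer (fun p => x (e p)) (pos j) j = j₀}ᶜ := by
      intro j hj hptr
      rw [Set.mem_ofPred_eq, DTree.eval_firstSome, List.findSome?_eq_none_iff] at hj
      have hnone := hj _ (List.mem_map_of_mem (List.mem_finRange (pos j)))
      rw [(hprobe (pos j) j x).1, hptr, if_pos (ofProp_eq_true.2 hw.allOnes)] at hnone
      exact Option.some_ne_none _ hnone
    have hcard := Set.ncard_le_ncard hsub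
    have hcompl := Set.ncard_add_ncard_compl {j | pointer (fun p => x (e p)) (pos j) j = j₀}
    rw [Nat.card_eq_fintype_card, card_column] at hcompl
    rw [card_column]
    linarith [hw.half_le]

theorem R0expq_certFn_pointerCert_le (e : MatrixBit R w → ι)
    {E : Column w × (Column w → Fin R) → Fin M → Fin 2} (hE : Function.Injective E) :
    R0expq (certFn (pointerCert e E)) ≤ (M + 2 + (R + 2 ^ (w + 1) * (w + 2)) : ℕ) := by
  classical
  refine R0expq_certFn_le fun y => ?_
  by_cases hy : ∃ p, encodeWitness E p = y
  · obtain ⟨⟨j, pos⟩, rfl⟩ := hy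
    have hencode : ∀ x, pointerCert e E x (encodeWitness E (j, pos)) =
        ofProp (IsWitness (fun q => x (e q)) j pos) := by
      intro x
      refine congrArg ofProp (propext ⟨?_, fun hw => ⟨(j, pos), rfl, hw⟩⟩)
      rintro ⟨p, hp, hw⟩
      rw [hE (Fin.cons_inj.1 (Fin.cons_inj.1 hp).2).2] at hw
      exact hw
    refine ⟨Finset.univ.image (fun i => e (i, j, none)) ∪
      Finset.univ.image (fun q : Column w × Option (Fin (w + 1)) => e (pos q.1, q.1, q.2)),
      ?_, fun x y h => ?_⟩
    · refine (Finset.card_union_le _ _).trans (Nat.add_le_add ?_ ?_) <;>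
        exact Finset.card_image_le.trans (by simp)
    · have hflags : ∀ i, x (e (i, j, none)) = y (e (i, j, none)) := fun i => h _ (by simp)
      have hentries : ∀ j' t, x (e (pos j', j', t)) = y (e (pos j', j', t)) :=
        fun j' t => h _ (by simp)
      simp only [hencode]
      exact congrArg ofProp (propext ⟨fun hw => hw.congr hflags hentries,
        fun hw => hw.congr (fun i => (hflags i).symm) fun j' t => (hentries j' t).symm⟩)
  · refine ⟨∅, by simp, fun x x' _ => ?_⟩
    have hreject : ∀ x, pointerCert e E x y = false := fun x =>
      ofProp_eq_false.2 fun ⟨p, hp, _⟩ => hy ⟨p, hp⟩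
    simp only [hreject]

end Pointer

/-- The row and column of an index of the input, if it belongs to the matrix. -/
noncomputable def matrixPos {R w : ℕ} {ι : Type} (e : MatrixBit R w → ι) :
    ι → Option (Fin R × Column w) :=
  Function.extend e (fun q => some (q.1, q.2.1)) fun _ => none

/-- The hard input for `pointerFn e`: the flag in column `j` is `0` exactly in row `r j`, and all
pointer bits are `0`. -/
noncomputable def hardInput {R w : ℕ} {ι : Type} (e : MatrixBit R w → ι)
    (r : Column w → Fin R) : Input ι fun _ => 2 :=
  hiddenInput (matrixPos e) (fun _ => 0)
    (Function.extend e (fun q => if q.2.2 = none then 1 else 0) 0) r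

open Classical in
/-- The matrix of `hardInput e r`, except that column `j` consists of ones and that the pointers
at the remaining zeros outside the columns in `S` lead to `j`. -/
noncomputable def plantedMatrix {R w : ℕ} (r : Column w → Fin R) (S : Finset (Column w))
    (j : Column w) : MatrixBit R w → Fin 2
  | (a, j', none) => if a = r j' ∧ j' ≠ j then 0 else 1
  | (a, j', some t) => if a = r j' ∧ j' ∉ S then j t else 0

section PointerLowerBound

variable {R w : ℕ} {ι : Type} {e : MatrixBit R w → ι}

theorem matrixPos_apply (he : Function.Injective e) (q : MatrixBit R w) :
    matrixPos e (e q) = some (q.1, q.2.1) := he.extend_apply _ _ q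

theorem hardInput_apply (he : Function.Injective e) (r : Column w → Fin R) (q : MatrixBit R w) :
    hardInput e r (e q) = if q.1 = r q.2.1 then 0 else if q.2.2 = none then 1 else 0 := by
  have hhidden : (∃ j, matrixPos e (e q) = some (r j, j)) ↔ q.1 = r q.2.1 := by
    simp [matrixPos_apply he]
  simp only [hardInput, hiddenInput, hhidden, he.extend_apply]

theorem hardInput_of_notMem_range (r : Column w → Fin R) {i : ι} (hi : ¬∃ q, e q = i) :
    hardInput e r i = 0 := by
  simp [hardInput, hiddenInput, Function.extend_apply' _ _ _ hi]

theorem isWitness_plantedMatrix (r : Column w → Fin R) {S : Finset (Column w)} (j : Column w)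
    (hS : S.card ≤ 2 ^ w) : IsWitness (plantedMatrix r S j) j r := by
  classical
  refine ⟨fun i => by simp [plantedMatrix], fun j' hj' => by simp [plantedMatrix, hj'], ?_⟩
  have hsub : ((Sᶜ : Finset (Column w)) : Set (Column w)) ⊆
      {j' | pointer (plantedMatrix r S j) (r j') j' = j} := by
    intro j' hj'
    have hj'S : j' ∉ S := by simpa using hj'
    funext t
    simp [pointer, plantedMatrix, hj'S]
  have hcard := Set.ncard_le_ncard hsub
  rw [Set.ncard_coe_finset, Finset.card_compl, card_column] at hcard
  rw [pow_succ] at hcard ⊢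
  omega

theorem hardInput_eq_extend_plantedMatrix (he : Function.Injective e) {r : Column w → Fin R}
    {S : Finset (Column w)} {j : Column w} (hj : j ∉ S) {i : ι}
    (hi : ∀ j', matrixPos e i = some (r j', j') → j' ∈ S) :
    hardInput e r i = Function.extend e (plantedMatrix r S j) 0 i := by
  by_cases hrange : ∃ q, e q = i
  · obtain ⟨⟨a, j', t⟩, rfl⟩ := hrange
    rw [hardInput_apply he, he.extend_apply]
    have hS : a = r j' → j' ∈ S := by
      rintro rfl
      exact hi j' (matrixPos_apply he _)
    have hne : a = r j' → j' ≠ j := fun ha h => hj (h ▸ hS ha)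
    cases t <;> by_cases ha : a = r j' <;> simp_all [plantedMatrix]
  · rw [hardInput_of_notMem_range r hrange, Function.extend_apply' _ _ _ hrange, Pi.zero_apply]

theorem exists_columnBit_eq {S : Finset (Column w)} (hS : S.card < 2 ^ w) (b : Bool) :
    ∃ j ∉ S, columnBit j = b := by
  classical
  let F : (Fin w → Fin 2) → Column w := fun v => Fin.cons (if b then 1 else 0) v
  have hF : Function.Injective F := fun v v' h => (Fin.cons_inj.1 h).2
  have hcard : S.card < (Finset.univ.image F).card := by
    rw [Finset.card_image_of_injective _ hF]
    simpa using hS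
  obtain ⟨j, hj, hjS⟩ := Finset.exists_mem_notMem_of_card_lt_card hcard
  obtain ⟨v, -, rfl⟩ := Finset.mem_image.1 hj
  exact ⟨_, hjS, by cases b <;> simp [F, columnBit]⟩

theorem exists_pointerFn_eq_some (he : Function.Injective e) (r : Column w → Fin R)
    {S : Finset (Column w)} (hS : S.card < 2 ^ w) (b : Bool) :
    ∃ x, pointerFn e x = some b ∧
      ∀ i, (∀ j, matrixPos e i = some (r j, j) → j ∈ S) → hardInput e r i = x i := by
  obtain ⟨j, hj, rfl⟩ := exists_columnBit_eq hS b
  refine ⟨Function.extend e (plantedMatrix r S j) 0, pointerFn_eq_some_iff.2 ⟨j, r, ?_, rfl⟩,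
    fun i hi => hardInput_eq_extend_plantedMatrix he hj hi⟩
  simpa only [he.extend_apply] using isWitness_plantedMatrix r j hS.le

theorem two_pow_le_Dq_pointerFn [Finite ι] (he : Function.Injective e) (hR : 0 < R) :
    2 ^ w ≤ Dq (pointerFn e) := by
  classical
  refine le_Dq_of_fooling (hardInput e fun _ => ⟨0, hR⟩) fun S hS b => ?_
  let columns := (S.toList.filterMap fun i => (matrixPos e i).map Prod.snd).toFinset
  have hcolumns : columns.card < 2 ^ w := by
    refine (List.toFinset_card_le _).trans_lt ((List.length_filterMap_le _ _).trans_lt ?_)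
    rwa [Finset.length_toList]
  obtain ⟨x, hx, hagree⟩ := exists_pointerFn_eq_some he (fun _ => ⟨0, hR⟩) hcolumns b
  refine ⟨x, hx, fun i hi => hagree i fun j hj => ?_⟩
  rw [List.mem_toFinset, List.mem_filterMap]
  exact ⟨i, Finset.mem_toList.2 hi, by rw [hj, Option.map_some]⟩

theorem csInput_hiddenInput {α : ι → ℕ} {Row Col : Type} {c k : ℕ}
    (pos : ι → Option (Row × Col)) (hit miss : Input ι α) (r : Col → Row) :
    csInput (k := k) (c := c) (fun _ => hiddenInput pos hit miss r) 0 =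
      hiddenInput (Sum.elim (fun p => pos p.2) fun _ => none) (csInput (fun _ => hit) 0)
        (csInput (fun _ => miss) 0) r := by
  funext q
  rcases q with p | q
  · rfl
  · exact (ite_self _).symm

/- An errorless algorithm that has found less than half of the hidden zeros cannot rule out that
every copy lies in the domain, with either value, so that an unqueried cell may be filled. -/
theorem two_pow_le_card_found {k c : ℕ} {hk : 0 < k}
    {φ : Input ι (fun _ => 2) → (Fin k → Fin 2) → Bool} (he : Function.Injective e)
    (h : IsCertifying hk (pointerFn e) φ) (hc : 0 < c)
    {T : DTree (CSIdx ι c k) (csAlphabet (fun _ => 2) c k) (Option Bool)}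
    (hT : T.Errorless (cheatSheet c (pointerFn e) φ)) (r : Column w → Fin R)
    (hcost : T.cost (csInput (fun _ => hardInput e r) 0) < 2 ^ c)
    (heval : T.eval (csInput (fun _ => hardInput e r) 0) ≠ none) :
    2 ^ w ≤ (found (Sum.elim (fun p => matrixPos e p.2) fun _ => none) r
      (T.path (csInput (fun _ => hardInput e r) 0))).card := by
  by_contra! hfew
  refine heval (h.eval_cheatSheet_eq_none hc hT _ hcost fun i b => ?_)
  obtain ⟨x, hx, hagree⟩ := exists_pointerFn_eq_some he r hfew b
  exact ⟨x, hx, fun q hq => hagree q fun j hj => mem_found.2 ⟨_, hq, hj⟩⟩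

theorem le_four_mul_R0expq_cheatSheet_pointerFn {k c m Q : ℕ} {hk : 0 < k}
    {φ : Input ι (fun _ => 2) → (Fin k → Fin 2) → Bool} (he : Function.Injective e)
    (h : IsCertifying hk (pointerFn e) φ) (hc : 0 < c) (hm : 0 < m) (hR : 16 * m ≤ R)
    (hQ : 2 ^ w = 2 * Q) (hmQ : m * Q ≤ 2 ^ c) :
    ((m * Q : ℕ) : ℝ≥0∞) ≤ 4 * R0expq (cheatSheet c (pointerFn e) φ) := by
  classical
  have : Nonempty (Fin R) := ⟨⟨0, by omega⟩⟩
  refine le_four_mul_R0expq_of_hard_family (Ω := Column w → Fin R)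
    (fun r => csInput (fun _ => hardInput e r) 0) (fun r => by simp [cheatSheet]) fun T hT => ?_
  let pos : CSIdx ι c k → Option (Fin R × Column w) :=
    Sum.elim (fun p => matrixPos e p.2) fun _ => none
  let hit : Input (CSIdx ι c k) (csAlphabet (fun _ => 2) c k) := csInput (fun _ _ => 0) 0
  let miss : Input (CSIdx ι c k) (csAlphabet (fun _ => 2) c k) :=
    csInput (fun _ => Function.extend e (fun q => if q.2.2 = none then 1 else 0) 0) 0
  have hinput : ∀ r, csInput (fun _ => hardInput e r) 0 = hiddenInput pos hit miss r := fun r =>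
    csInput_hiddenInput _ _ _ r
  have hsub : {r | T.cost (csInput (fun _ => hardInput e r) 0) < m * Q ∧
      T.eval (csInput (fun _ => hardInput e r) 0) ≠ none} ⊆
      {r | T.cost (hiddenInput pos hit miss r) < m * Q ∧
        2 * Q ≤ (found pos r (T.path (hiddenInput pos hit miss r))).card} := by
    rintro r ⟨hcost, heval⟩
    rw [Set.mem_ofPred_eq, ← hinput, ← hQ]
    exact ⟨hcost, two_pow_le_card_found he h hc hT r (hcost.trans_le hmQ) heval⟩
  have hcard := card_mul_ncard_found_le T pos hit miss m Q
  rw [Fintype.card_fin, card_column, pow_succ, hQ] at hcard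
  have hQ0 : 0 < Q := by
    have hpow := Nat.two_pow_pos w
    omega
  refine Nat.le_of_mul_le_mul_left ?_ (by positivity : 0 < 4 * (m * Q))
  calc _ = 16 * m * (Q * _) := by ring
    _ ≤ R * (Q * _) := Nat.mul_le_mul hR (Nat.mul_le_mul_left Q (Set.ncard_le_ncard hsub))
    _ ≤ _ := hcard
    _ = _ := by ring

end PointerLowerBound

/-- The certifying function that ignores the certificate except for the claimed value of `f` and a
bit `1` distinguishing it from the empty certificate. -/
noncomputable def selfCert {ι : Type} {α : ι → ℕ} (f : PartialFn ι α) (x : Input ι α)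
    (y : Fin 2 → Fin 2) : Bool :=
  ofProp (f x = some (decide (y 0 = 1)) ∧ y 1 = 1)

theorem isCertifying_selfCert {ι : Type} {α : ι → ℕ} (f : PartialFn ι α) :
    IsCertifying Nat.two_pos f (selfCert f) := by
  refine ⟨fun x y hx => ?_, fun x y b hx hy => ?_, fun x b hx => ?_, fun x => ?_⟩
  · exact ofProp_eq_false.2 fun h => by simp [hx] at h
  · refine ofProp_eq_false.2 fun h => hy ?_
    change y 0 = _
    rw [hx, Option.some.injEq] at h
    rw [h.1]
    simp only [decide_eq_true_eq]
    split_ifs <;> omega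
  · exact ⟨![if b then 1 else 0, 1], ofProp_eq_true.2 (by cases b <;> simp [hx])⟩
  · exact ofProp_eq_false.2 (by simp)

/-- The conjunction of all input bits, as a query function. -/
noncomputable def conjunction (ι : Type) : PartialFn ι fun _ => 2 :=
  fun x => some (ofProp (∀ i, x i = 1))

theorem exists_conjunction_eq_some {ι : Type} [Fintype ι] {S : Finset ι}
    (hS : S.card < Fintype.card ι) (b : Bool) :
    ∃ x, conjunction ι x = some b ∧ ∀ i ∈ S, 1 = x i := by
  classical
  cases b with
  | true => exact ⟨fun _ => 1, congrArg some (ofProp_eq_true.2 fun _ => rfl), fun _ _ => rfl⟩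
  | false =>
    obtain ⟨i, -, hi⟩ := Finset.exists_mem_notMem_of_card_lt_card
      (hS.trans_eq Finset.card_univ.symm)
    refine ⟨Function.update (fun _ => 1) i 0, congrArg some (ofProp_eq_false.2 ?_), ?_⟩
    · exact fun h => by simpa using h i
    · exact fun i' hi' => by rw [Function.update_of_ne (ne_of_mem_of_not_mem hi' hi)]

theorem card_le_Dq_conjunction (ι : Type) [Fintype ι] :
    Fintype.card ι ≤ Dq (conjunction ι) :=
  le_Dq_of_fooling (fun _ => 1) fun _ hS b => exists_conjunction_eq_some hS b

/-- The bounds of the separation with constant `A`, for inputs of `n` bits. -/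
def Separates (A n : ℕ) {k : ℕ} (f : PartialFn (Fin n) fun _ => 2)
    (φ : Input (Fin n) (fun _ => 2) → (Fin k → Fin 2) → Bool) : Prop :=
  R0expq f ≤ (A : ℝ≥0∞) * (n : ℝ≥0∞) ^ ((2 : ℝ) / 3) ∧
  R0expq (certFn φ) ≤ (A : ℝ≥0∞) * (Nat.log 2 n : ℝ≥0∞) * (n : ℝ≥0∞) ^ ((2 : ℝ) / 3) ∧
  (n : ℝ≥0∞) ≤ (A : ℝ≥0∞) * (Nat.log 2 n : ℝ≥0∞) *
    R0expq (cheatSheet (10 * Nat.clog 2 (Dq f)) f φ)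

theorem ten_mul_clog_pos {D : ℕ} (hD : 2 ≤ D) : 0 < 10 * Nat.clog 2 D :=
  Nat.mul_pos (by norm_num) (Nat.clog_pos Nat.one_lt_two hD)

section Parameters

variable {A n u v k : ℕ}

theorem Separates.mono {B : ℕ} {f : PartialFn (Fin n) fun _ => 2}
    {φ : Input (Fin n) (fun _ => 2) → (Fin k → Fin 2) → Bool}
    (h : Separates A n f φ) (hAB : A ≤ B) : Separates B n f φ := by
  obtain ⟨hf, hφ, hcs⟩ := h
  exact ⟨hf.trans (by gcongr), hφ.trans (by gcongr), hcs.trans (by gcongr)⟩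

theorem separates_conjunction (hn : 2 ≤ n) :
    Separates (4 * n) n (conjunction (Fin n)) (selfCert (conjunction (Fin n))) := by
  have hlog : (1 : ℝ≥0∞) ≤ (Nat.log 2 n : ℝ≥0∞) := by
    exact_mod_cast Nat.log_pos Nat.one_lt_two hn
  have hrpow : 1 ≤ (n : ℝ≥0∞) ^ ((2 : ℝ) / 3) :=
    ENNReal.one_le_rpow (by exact_mod_cast one_le_two.trans hn) (by norm_num)
  have hD : n ≤ Dq (conjunction (Fin n)) := by
    simpa using card_le_Dq_conjunction (Fin n)
  refine ⟨?_, ?_, ?_⟩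
  · calc R0expq (conjunction (Fin n)) ≤ (n : ℕ) := by
          simpa using R0expq_le_card (conjunction (Fin n))
      _ ≤ ((4 * n : ℕ) : ℝ≥0∞) * 1 := by
          exact_mod_cast (by omega : n ≤ 4 * n * 1)
      _ ≤ _ := by gcongr
  · calc R0expq (certFn (selfCert (conjunction (Fin n)))) ≤ (n + 2 : ℕ) := by
          simpa using R0expq_le_card (certFn (selfCert (conjunction (Fin n))))
      _ ≤ ((4 * n : ℕ) : ℝ≥0∞) * 1 * 1 := by
          exact_mod_cast (by omega : n + 2 ≤ 4 * n * 1 * 1)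
      _ ≤ _ := by gcongr
  · have hcs := (isCertifying_selfCert (conjunction (Fin n))).one_le_four_mul_R0expq_cheatSheet
      (ten_mul_clog_pos (hn.trans hD)) fun b =>
        (exists_conjunction_eq_some (S := ∅) (by simp; omega) b).imp fun _ => And.left
    calc (n : ℝ≥0∞) ≤ n * 1 * (4 * _) := by
          rw [mul_one]
          exact le_mul_of_one_le_right zero_le hcs
      _ ≤ n * (Nat.log 2 n : ℝ≥0∞) * (4 * _) := by gcongr
      _ = _ := by
          push_cast
          ring

theorem four_pow_le_rpow (h : 8 ^ u ≤ n) :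
    ((4 ^ u : ℕ) : ℝ≥0∞) ≤ (n : ℝ≥0∞) ^ ((2 : ℝ) / 3) := by
  have hcube : ((2 : ℝ≥0∞) ^ u) ^ (3 : ℝ) ≤ n := by
    rw [ENNReal.rpow_ofNat, ← pow_mul, mul_comm, pow_mul]
    exact_mod_cast h
  calc ((4 ^ u : ℕ) : ℝ≥0∞) = (((2 : ℝ≥0∞) ^ u) ^ (3 : ℝ)) ^ ((2 : ℝ) / 3) := by
        rw [← ENNReal.rpow_mul, mul_div_cancel₀ _ three_ne_zero, ENNReal.rpow_ofNat, ← pow_mul,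
          mul_comm, pow_mul]
        norm_num
    _ ≤ _ := ENNReal.rpow_le_rpow hcube (by norm_num)

theorem le_log_two_of_eight_pow_le (h : 8 ^ u ≤ n) : u ≤ Nat.log 2 n :=
  Nat.le_log_of_pow_le Nat.one_lt_two ((Nat.pow_le_pow_left (by norm_num) u).trans h)

theorem R0expq_pointerFn_le_rpow {w : ℕ} (hw : w + 1 = 2 * u) (hn : 8 ^ u ≤ n)
    (e : MatrixBit (2 ^ u) w → Fin n) :
    R0expq (pointerFn e) ≤ 3 * (n : ℝ≥0∞) ^ ((2 : ℝ) / 3) := by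
  have hle : 2 ^ u * (w + 1 + 2 ^ u) ≤ 3 * 4 ^ u := by
    have hu : u < 2 ^ u := Nat.lt_two_pow_self
    have hsq : 2 ^ u * 2 ^ u = 4 ^ u := by rw [← mul_pow]; rfl
    rw [hw, ← hsq]
    nlinarith
  calc R0expq (pointerFn e) ≤ (2 ^ u * (w + 1 + 2 ^ u) : ℕ) := R0expq_pointerFn_le e
    _ ≤ (3 * 4 ^ u : ℕ) := by exact_mod_cast hle
    _ ≤ _ := by
        rw [Nat.cast_mul]
        exact mul_le_mul_right (four_pow_le_rpow hn) _

theorem R0expq_certFn_pointerCert_le_rpow {w : ℕ} (hu : 0 < u) (hw : w + 1 = 2 * u)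
    (hn : 8 ^ u ≤ n) (e : MatrixBit (2 ^ u) w → Fin n)
    {E : Column w × (Column w → Fin (2 ^ u)) → Fin (w + 1 + u * 2 ^ (w + 1)) → Fin 2}
    (hE : Function.Injective E) :
    R0expq (certFn (pointerCert e E)) ≤
      9 * (Nat.log 2 n : ℝ≥0∞) * (n : ℝ≥0∞) ^ ((2 : ℝ) / 3) := by
  have hle : w + 1 + u * 2 ^ (w + 1) + 2 + (2 ^ u + 2 ^ (w + 1) * (w + 2)) ≤ 9 * u * 4 ^ u := by
    have hcols : 2 ^ (w + 1) = 4 ^ u := by rw [hw, pow_mul]; rfl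
    have hrows : 2 ^ u ≤ 4 ^ u := Nat.pow_le_pow_left (by norm_num) u
    have hmul : 4 ^ u ≤ u * 4 ^ u := Nat.le_mul_of_pos_left _ hu
    have hu4 : u * 1 ≤ u * 4 ^ u := Nat.mul_le_mul_left u (Nat.one_le_pow _ _ (by norm_num))
    rw [hcols, show w + 2 = 2 * u + 1 by omega, hw]
    nlinarith
  calc R0expq (certFn (pointerCert e E))
      ≤ (w + 1 + u * 2 ^ (w + 1) + 2 + (2 ^ u + 2 ^ (w + 1) * (w + 2)) : ℕ) :=
        R0expq_certFn_pointerCert_le e hE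
    _ ≤ (9 * u * 4 ^ u : ℕ) := by exact_mod_cast hle
    _ = 9 * (u : ℝ≥0∞) * (4 ^ u : ℕ) := by rw [Nat.cast_mul, Nat.cast_mul, Nat.cast_ofNat]
    _ ≤ _ := by
        gcongr
        · exact le_log_two_of_eight_pow_le hn
        · exact four_pow_le_rpow hn

/- The exponent of `R = 2 ^ (v + 4)` makes room for `m = 2 ^ v` with `16 * m ≤ R`. -/
theorem le_mul_R0expq_cheatSheet_pointerFn {hk : 0 < k}
    {φ : Input (Fin n) (fun _ => 2) → (Fin k → Fin 2) → Bool}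
    {e : MatrixBit (2 ^ (v + 4)) (2 * v + 7) → Fin n} (he : Function.Injective e)
    (h : IsCertifying hk (pointerFn e) φ) (hn : 8 ^ (v + 4) ≤ n)
    (hn' : n < 8 ^ (v + 5) * (2 * (v + 5) + 1)) :
    (n : ℝ≥0∞) ≤ 6144 * (Nat.log 2 n : ℝ≥0∞) *
      R0expq (cheatSheet (10 * Nat.clog 2 (Dq (pointerFn e))) (pointerFn e) φ) := by
  have hD : 2 ^ (2 * v + 7) ≤ Dq (pointerFn e) := two_pow_le_Dq_pointerFn he (by positivity)
  have hclog : 2 * v + 7 ≤ Nat.clog 2 (Dq (pointerFn e)) :=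
    (Nat.pow_le_pow_iff_right Nat.one_lt_two).1
      (hD.trans (Nat.le_pow_clog Nat.one_lt_two _))
  have hcells : 2 ^ v * 2 ^ (2 * v + 6) ≤ 2 ^ (10 * Nat.clog 2 (Dq (pointerFn e))) := by
    rw [← pow_add]
    exact Nat.pow_le_pow_right Nat.two_pos (by omega)
  have hlower := le_four_mul_R0expq_cheatSheet_pointerFn he h (by omega) (Nat.two_pow_pos v)
    (by rw [pow_add, mul_comm]; rfl) (pow_succ' _ _) hcells
  have hsize : n ≤ 1536 * (v + 4) * (2 ^ v * 2 ^ (2 * v + 6)) := by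
    have hprod : 2 ^ v * 2 ^ (2 * v + 6) = 64 * 8 ^ v := by
      rw [pow_add, pow_mul, mul_comm, mul_right_comm, ← mul_pow, mul_comm]
      rfl
    have hpos := Nat.pow_pos (n := v) (by norm_num : 0 < 8)
    rw [hprod]
    rw [pow_add] at hn'
    nlinarith
  calc (n : ℝ≥0∞) ≤ (1536 * (v + 4) * (2 ^ v * 2 ^ (2 * v + 6)) : ℕ) := by exact_mod_cast hsize
    _ = 1536 * ((v + 4 : ℕ) : ℝ≥0∞) * (2 ^ v * 2 ^ (2 * v + 6) : ℕ) := by push_cast; rfl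
    _ ≤ 1536 * (Nat.log 2 n : ℝ≥0∞) * (4 * _) := by
        gcongr
        exact le_log_two_of_eight_pow_le hn
    _ = _ := by ring

theorem exists_matrix_size (hn : 8 ^ 4 * 9 ≤ n) :
    ∃ v, 8 ^ (v + 4) * (2 * (v + 4) + 1) ≤ n ∧ n < 8 ^ (v + 5) * (2 * (v + 5) + 1) := by
  have hlarge : ∃ v, n < 8 ^ (v + 5) * (2 * (v + 5) + 1) := by
    refine ⟨n, (Nat.lt_pow_self (by norm_num : 1 < 8)).trans_le ?_⟩
    exact (Nat.pow_le_pow_right (by norm_num) (by omega)).trans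
      (Nat.le_mul_of_pos_right _ (by omega))
  classical
  refine ⟨Nat.find hlarge, ?_, Nat.find_spec hlarge⟩
  cases hv : Nat.find hlarge with
  | zero => exact hn
  | succ v => exact not_lt.1 (Nat.find_min hlarge (hv ▸ v.lt_succ_self))

theorem exists_separates_pointerFn (hn : 8 ^ 4 * 9 ≤ n) :
    ∃ (f : PartialFn (Fin n) fun _ => 2) (k : ℕ)
      (φ : Input (Fin n) (fun _ => 2) → (Fin k → Fin 2) → Bool) (hk : 0 < k),
      IsCertifying hk f φ ∧ Separates 6144 n f φ := by
  obtain ⟨v, hv, hv'⟩ := exists_matrix_size hn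
  have h8 : 8 ^ (v + 4) ≤ n := (Nat.le_mul_of_pos_right _ (by omega)).trans hv
  have hcols : 2 ^ (2 * v + 7 + 1) = 4 ^ (v + 4) := by
    rw [show 2 * v + 7 + 1 = 2 * (v + 4) by ring, pow_mul]
    rfl
  obtain ⟨e⟩ : Nonempty (MatrixBit (2 ^ (v + 4)) (2 * v + 7) ↪ Fin n) := by
    refine Function.Embedding.nonempty_of_card_le ?_
    rw [Fintype.card_prod, Fintype.card_prod, Fintype.card_option, card_column, hcols]
    simp only [Fintype.card_fin]
    rw [← mul_assoc, ← mul_pow]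
    exact hv
  obtain ⟨E⟩ : Nonempty (Column (2 * v + 7) × (Column (2 * v + 7) → Fin (2 ^ (v + 4))) ↪
      (Fin (2 * v + 7 + 1 + (v + 4) * 2 ^ (2 * v + 7 + 1)) → Fin 2)) := by
    refine Function.Embedding.nonempty_of_card_le ?_
    rw [Fintype.card_prod, card_column, Fintype.card_fun, card_column, Fintype.card_fun]
    simp only [Fintype.card_fin]
    rw [← pow_mul, ← pow_add]
  obtain ⟨hf, hφ⟩ : R0expq (pointerFn e) ≤ 3 * (n : ℝ≥0∞) ^ ((2 : ℝ) / 3) ∧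
      R0expq (certFn (pointerCert e E)) ≤
        9 * (Nat.log 2 n : ℝ≥0∞) * (n : ℝ≥0∞) ^ ((2 : ℝ) / 3) :=
    ⟨R0expq_pointerFn_le_rpow (by ring) h8 e,
      R0expq_certFn_pointerCert_le_rpow (by omega) (by ring) h8 e E.injective⟩
  have hcert := isCertifying_pointerCert e E
  refine ⟨_, _, _, _, hcert, hf.trans ?_, hφ.trans ?_,
    le_mul_R0expq_cheatSheet_pointerFn e.injective hcert h8 hv'⟩
  all_goals
    gcongr
    norm_num

theorem exists_separates : ∃ A, 0 < A ∧ ∀ n, ∃ (f : PartialFn (Fin n) fun _ => 2) (k : ℕ)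
    (φ : Input (Fin n) (fun _ => 2) → (Fin k → Fin 2) → Bool) (hk : 0 < k),
    IsCertifying hk f φ ∧ (2 ≤ n → Separates A n f φ) := by
  refine ⟨4 * (8 ^ 4 * 9), by norm_num, fun n => ?_⟩
  rcases lt_or_ge n (8 ^ 4 * 9) with hn | hn
  · exact ⟨_, _, _, _, isCertifying_selfCert (conjunction (Fin n)), fun h2 =>
      (separates_conjunction h2).mono (by omega)⟩
  · obtain ⟨f, k, φ, hk, hcert, hsep⟩ := exists_separates_pointerFn hn
    exact ⟨f, k, φ, hk, hcert, fun _ => hsep.mono (by norm_num)⟩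

theorem rpow_le_of_le_mul_rpow {a B : ℝ≥0∞} (hB : 1 ≤ B)
    (h : a ≤ B * (n : ℝ≥0∞) ^ ((2 : ℝ) / 3)) : a ^ ((3 : ℝ) / 2) ≤ B ^ 2 * n := by
  calc a ^ ((3 : ℝ) / 2) ≤ (B * (n : ℝ≥0∞) ^ ((2 : ℝ) / 3)) ^ ((3 : ℝ) / 2) :=
        ENNReal.rpow_le_rpow h (by norm_num)
    _ = B ^ ((3 : ℝ) / 2) * n := by
        rw [ENNReal.mul_rpow_of_nonneg _ _ (by norm_num), ← ENNReal.rpow_mul]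
        norm_num
    _ ≤ B ^ 2 * n := by
        rw [← ENNReal.rpow_ofNat]
        gcongr
        norm_num

theorem Separates.rpow_add_rpow_le {f : PartialFn (Fin n) fun _ => 2}
    {φ : Input (Fin n) (fun _ => 2) → (Fin k → Fin 2) → Bool} (h : Separates A n f φ)
    (hA : 0 < A) (hn : 2 ≤ n) :
    R0expq f ^ ((3 : ℝ) / 2) + R0expq (certFn φ) ^ ((3 : ℝ) / 2) ≤
      2 * (A : ℝ≥0∞) ^ 3 * (Nat.log 2 n : ℝ≥0∞) ^ 3 *
        R0expq (cheatSheet (10 * Nat.clog 2 (Dq f)) f φ) := by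
  obtain ⟨hf, hφ, hcs⟩ := h
  have hA1 : (1 : ℝ≥0∞) ≤ A := by exact_mod_cast hA
  have hlog : (1 : ℝ≥0∞) ≤ (Nat.log 2 n : ℝ≥0∞) := by
    exact_mod_cast Nat.log_pos Nat.one_lt_two hn
  have hf' := hf.trans (mul_le_mul_left (le_mul_of_one_le_right zero_le hlog) _)
  have hAlog := one_le_mul hA1 hlog
  calc _ ≤ ((A : ℝ≥0∞) * Nat.log 2 n) ^ 2 * n + ((A : ℝ≥0∞) * Nat.log 2 n) ^ 2 * n :=
        add_le_add (rpow_le_of_le_mul_rpow hAlog hf') (rpow_le_of_le_mul_rpow hAlog hφ)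
    _ = 2 * ((A : ℝ≥0∞) * Nat.log 2 n) ^ 2 * n := by ring
    _ ≤ 2 * ((A : ℝ≥0∞) * Nat.log 2 n) ^ 2 * (A * Nat.log 2 n * _) := by gcongr
    _ = _ := by ring

end Parameters

end QC

/-- There is a family of partial functions `f` on `{0,1}^n` and
certifying functions `φ` with `R₀(f_CS(φ)) = Ω̃(R₀(f)^{3/2} + R₀(φ)^{3/2})`;
in particular `R₀(f) = O(n^{2/3})` and `R₀(φ) = Õ(n^{2/3})` while
`R₀(f_CS(φ)) = Ω̃(n)`. -/
theorem zero_error_cheat_sheet_can_increase :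
    ∃ (f : ∀ n : ℕ, QC.PartialFn (Fin n) fun _ => 2) (k : ℕ → ℕ)
      (φ : ∀ n, QC.Input (Fin n) (fun _ => 2) → (Fin (k n) → Fin 2) → Bool)
      (hk : ∀ n, 0 < k n),
      (∀ n, QC.IsCertifying (hk n) (f n) (φ n)) ∧
      ∃ (C e : ℕ), 0 < C ∧ ∀ n : ℕ, 2 ≤ n →
        QC.R0expq (f n) ≤ (C : ℝ≥0∞) * (n : ℝ≥0∞) ^ ((2 : ℝ) / 3) ∧
        QC.R0expq (QC.certFn (φ n)) ≤
          (C : ℝ≥0∞) * (Nat.log 2 n : ℝ≥0∞) ^ e * (n : ℝ≥0∞) ^ ((2 : ℝ) / 3) ∧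
        (n : ℝ≥0∞) ≤ (C : ℝ≥0∞) * (Nat.log 2 n : ℝ≥0∞) ^ e *
          QC.R0expq (QC.cheatSheet (10 * Nat.clog 2 (QC.Dq (f n))) (f n) (φ n)) ∧
        QC.R0expq (f n) ^ ((3 : ℝ) / 2) + QC.R0expq (QC.certFn (φ n)) ^ ((3 : ℝ) / 2) ≤
          (C : ℝ≥0∞) * (Nat.log 2 n : ℝ≥0∞) ^ e *
            QC.R0expq (QC.cheatSheet (10 * Nat.clog 2 (QC.Dq (f n))) (f n) (φ n)) := by
  obtain ⟨A, hA, hsep⟩ := QC.exists_separates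
  choose f k φ hk hcert hsep using hsep
  refine ⟨f, k, φ, hk, hcert, 2 * A ^ 3, 3, by positivity, fun n hn => ?_⟩
  have hAC : A ≤ 2 * A ^ 3 := (Nat.le_self_pow three_ne_zero A).trans (by omega)
  obtain ⟨hf, hφ, hcs⟩ := (hsep n hn).mono hAC
  have hlog : (Nat.log 2 n : ℝ≥0∞) ≤ (Nat.log 2 n : ℝ≥0∞) ^ 3 := by
    exact_mod_cast Nat.le_self_pow three_ne_zero _
  refine ⟨hf, hφ.trans (by gcongr), hcs.trans (by gcongr), ?_⟩
  exact_mod_cast (hsep n hn).rpow_add_rpow_le hA hn
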